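/- Let Θ ∈ (0,π), β ∈ (0,α), κ ≥ 1 and κ' ≥ 1. Let M : ℝ^d → ℝ be continuous, nonnegative, equal to 0 on ℝ^d∖Γ_Θ, twice continuously differentiable on Γ_Θ, positively homogeneous of degree β, with Δ^{α/2}M(x) existing and equal to 0 for all x ∈ Γ_Θ, and κ^{-1}·dist(θ,ℝ^d∖Γ_Θ)^{α/2} ≤ M(θ) ≤ κ·dist(θ,ℝ^d∖Γ_Θ)^{α/2} for all θ ∈ S^{d-1}. Let φ : S^{d-1} → ℝ be continuous, with its 0-homogeneous extension to ℝ^d∖{0} twice continuously differentiable in a neighborhood of every point of B_Θ, and suppose κ'^{-1}·dist(θ,ℝ^d∖Γ_Θ)^{α/2} ≤ φ(θ) ≤ κ'·dist(θ,ℝ^d∖Γ_Θ)^{α/2} for all θ ∈ S^{d-1}. Let λ ∈ (0,α). If for every η ∈ B_Θ the quantity Δ_S^{α/2}φ(η) exists, R_λφ(η) is finite and Δ_S^{α/2}φ(η) + R_λφ(η) ≥ 0, then λ ≥ β. If for every η ∈ B_Θ the quantity Δ_S^{α/2}φ(η) exists, R_λφ(η) is finite and Δ_S^{α/2}φ(η)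 + R_λφ(η) ≤ 0, then λ ≤ β. -/

import Mathlib

open MeasureTheory Metric Real Set Filter RealInnerProductSpace
open scoped ENNReal

noncomputable section

/-- Euclidean space ℝ^d. -/
abbrev Ed (d : ℕ) := EuclideanSpace ℝ (Fin d)

/-- The constant `A_{d,α}`. -/
noncomputable def fracConst (d : ℕ) (α : ℝ) : ℝ :=
  α * 2 ^ (α - 1) * π ^ (-(d : ℝ) / 2) * Real.Gamma (((d : ℝ) + α) / 2) / Real.Gamma (1 - α / 2)

/-- The fractional Laplacian `Δ^{α/2} Φ (x)` exists and equals `L`. -/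
def fracLapAt (d : ℕ) (α : ℝ) (Φ : Ed d → ℝ) (x : Ed d) (L : ℝ) : Prop :=
  Filter.Tendsto
    (fun ε : ℝ => fracConst d α *
      ∫ y in {y : Ed d | ε < ‖y - x‖}, (Φ y - Φ x) * ‖y - x‖ ^ (-(d : ℝ) - α))
    (nhdsWithin 0 (Set.Ioi 0)) (nhds L)

/-- The last coordinate of a vector in ℝ^d. -/
def lastCoord (d : ℕ) (x : Ed d) : ℝ :=
  if h : 0 < d then x ⟨d - 1, Nat.sub_lt h Nat.one_pos⟩ else 0

/-- The unit vector `e_d = (0,…,0,1)`. -/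
def eLast (d : ℕ) : Ed d :=
  if h : 0 < d then EuclideanSpace.single ⟨d - 1, Nat.sub_lt h Nat.one_pos⟩ (1 : ℝ) else 0

/-- The right circular cone `Γ_Θ` of angle `Θ`. -/
def cone (d : ℕ) (Θ : ℝ) : Set (Ed d) := {x | ‖x‖ * Real.cos Θ < lastCoord d x}

/-- The unit sphere `S^{d-1}` in ℝ^d. -/
def unitSphere (d : ℕ) : Set (Ed d) := Metric.sphere (0 : Ed d) 1

/-- The spherical cap `B_Θ`. -/
def capB (d : ℕ) (Θ : ℝ) : Set (Ed d) := {θ | θ ∈ unitSphere d ∧ Real.cos Θ < lastCoord d θ}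

/-- The surface measure `σ`: the (d-1)-dimensional Hausdorff measure. -/
noncomputable def sphMeasure (d : ℕ) : Measure (Ed d) := μH[(d : ℝ) - 1]

/-- The kernel `u_λ(t)`. -/
noncomputable def uKernel (d : ℕ) (α lam t : ℝ) : ℝ :=
  ∫ r in Set.Ioi (0 : ℝ), r ^ ((d : ℝ) + lam - 1) * (r ^ 2 - 2 * r * t + 1) ^ (-((d : ℝ) + α) / 2)

/-- The kernel `u_λ(t)` as a value in `[0,∞]`. -/
noncomputable def uKernelE (d : ℕ) (α lam t : ℝ) : ℝ≥0∞ :=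
  ∫⁻ r in Set.Ioi (0 : ℝ),
    ENNReal.ofReal (r ^ ((d : ℝ) + lam - 1) * (r ^ 2 - 2 * r * t + 1) ^ (-((d : ℝ) + α) / 2))

/-- The spherical fractional Laplacian `Δ_S^{α/2} φ (η)` exists and equals `L`. -/
def sphFracLapAt (d : ℕ) (α : ℝ) (φ : Ed d → ℝ) (η : Ed d) (L : ℝ) : Prop :=
  Filter.Tendsto
    (fun ε : ℝ => fracConst d α *
      ∫ θ in {θ : Ed d | θ ∈ unitSphere d ∧ ⟪θ, η⟫ ≤ Real.cos ε},
        (φ θ - φ η) * uKernel d α 0 ⟪θ, η⟫ ∂(sphMeasure d))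
    (nhdsWithin 0 (Set.Ioi 0)) (nhds L)

/-- The integrand of the radial operator `R_λ`. -/
noncomputable def RopIntegrand (d : ℕ) (α lam : ℝ) (φ : Ed d → ℝ) (η θ : Ed d) : ℝ :=
  φ θ * (uKernel d α lam ⟪θ, η⟫ - uKernel d α 0 ⟪θ, η⟫)

/-- The radial operator `R_λ φ (η)`. -/
noncomputable def Rop (d : ℕ) (α lam : ℝ) (φ : Ed d → ℝ) (η : Ed d) : ℝ :=
  fracConst d α * ∫ θ in unitSphere d, RopIntegrand d α lam φ η θ ∂(sphMeasure d)

/-- The modulus `ω`. -/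
noncomputable def omegaFn (α Θ : ℝ) : ℝ :=
  if α < 1 then Θ ^ α else if α = 1 then Θ * |Real.log Θ| else Θ

/-- The Euler beta function. -/
noncomputable def eulerBeta (a b : ℝ) : ℝ := Real.Gamma a * Real.Gamma b / Real.Gamma (a + b)

/-- The constant `B_{d,α}`. -/
noncomputable def Bconst (d : ℕ) (α : ℝ) : ℝ :=
  Real.Gamma (((d : ℝ) + α) / 2) / (π ^ ((3 : ℝ) / 2) * Real.Gamma (((d : ℝ) - 1 + α) / 2)) *
    Real.sin (π * α / 2) * eulerBeta (1 + α / 2) (((d : ℝ) - 1) / 2)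

/-- The constant `C_{d-1,α}`. -/
noncomputable def Cexit (d : ℕ) (α : ℝ) : ℝ :=
  Real.Gamma (((d : ℝ) - 1) / 2) /
    (2 ^ α * Real.Gamma (((d : ℝ) - 1 + α) / 2) * Real.Gamma (1 + α / 2))

/-- The constant `C̃_{d,α}`. -/
noncomputable def Ctilde (d : ℕ) (α : ℝ) : ℝ :=
  π ^ (((d : ℝ) - 1) / 2) / Real.Gamma (((d : ℝ) - 1) / 2) * Cexit d α *
    eulerBeta (1 + α / 2) (((d : ℝ) - 1) / 2)

/-- The norm `|ỹ|` of the first `d-1` coordinates of `y`. -/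
noncomputable def tnorm (d : ℕ) (y : Ed d) : ℝ :=
  Real.sqrt (∑ i : Fin d, if (i : ℕ) < d - 1 then (y i) ^ 2 else 0)

/-- The function `s_ε`. -/
noncomputable def sExit (d : ℕ) (α ε : ℝ) (y : Ed d) : ℝ :=
  Cexit d α * (max (ε ^ 2 - tnorm d y ^ 2) 0) ^ (α / 2)

/-- The cylinder `Π_ε`. -/
def cylPi (d : ℕ) (ε : ℝ) : Set (Ed d) := {y | tnorm d y < ε}

/-- The hyperplane `F = {y : y_d = 1}`. -/
def hyperF (d : ℕ) : Set (Ed d) := {y | lastCoord d y = 1}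

/-- The Riesz kernel `h(y) = |y|^{α-d}`. -/
noncomputable def rieszH (d : ℕ) (α : ℝ) (y : Ed d) : ℝ := ‖y‖ ^ (α - (d : ℝ))

/-- The inversion `T x = x/|x|²`. -/
noncomputable def inversion (d : ℕ) (x : Ed d) : Ed d := (‖x‖ ^ 2)⁻¹ • x

/-- The shifted cone `V_Θ = Γ_Θ + e_d/2`. -/
def Vcone (d : ℕ) (Θ : ℝ) : Set (Ed d) := {y | y - (1 / 2 : ℝ) • eLast d ∈ cone d Θ}

/-- The spindle `L_ε = T(V_Θ)` with `ε = tan(Θ/2)`, i.e. `Θ = 2 arctan ε`. -/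
def Lspindle (d : ℕ) (ε : ℝ) : Set (Ed d) := inversion d '' Vcone d (2 * Real.arctan ε)

/-- The curvilinear projection `y* = T(e_d/2 + (Ty - e_d/2)/(2|Ty - e_d/2|))`. -/
noncomputable def ystar (d : ℕ) (y : Ed d) : Ed d :=
  inversion d ((1 / 2 : ℝ) • eLast d +
    (2 * ‖inversion d y - (1 / 2 : ℝ) • eLast d‖)⁻¹ • (inversion d y - (1 / 2 : ℝ) • eLast d))

open scoped Classical in
/-- The function `s*_ε`. -/
noncomputable def sStar (d : ℕ) (α ε : ℝ) (y : Ed d) : ℝ :=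
  if y ∈ Lspindle d ε then Cexit d α * (max (ε ^ 2 - tnorm d (ystar d y) ^ 2) 0) ^ (α / 2)
  else 0

open scoped Classical in
/-- The function `u = K(h s*_ε)`, i.e. `u(y) = s*_ε(Ty)`, `u(0) = 0`. -/
noncomputable def uFn (d : ℕ) (α ε : ℝ) (y : Ed d) : ℝ :=
  if y = 0 then 0 else sStar d α ε (inversion d y)

/-- The spherical profile `φ_Θ`. -/
noncomputable def profileFn (d : ℕ) (α Θ : ℝ) (θ : Ed d) : ℝ :=
  2 ^ α * Cexit d α *
    (max (Real.tan (Θ / 2) ^ 2 - ‖eLast d - θ‖ ^ 2 / ‖eLast d + θ‖ ^ 2) 0) ^ (α / 2)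

/-- Laplacian on ℝ^d as the sum of pure second partial derivatives. -/
noncomputable def lapE (d : ℕ) (u : Ed d → ℝ) (x : Ed d) : ℝ :=
  ∑ i : Fin d,
    iteratedFDeriv ℝ 2 u x ![EuclideanSpace.single i (1 : ℝ), EuclideanSpace.single i (1 : ℝ)]

/-- Laplacian on ℝ^d × ℝ as the sum of the d+1 pure second partial derivatives. -/
noncomputable def lapProd (d : ℕ) (U : Ed d × ℝ → ℝ) (p : Ed d × ℝ) : ℝ :=
  (∑ i : Fin d, iteratedFDeriv ℝ 2 U p
      ![(EuclideanSpace.single i (1 : ℝ), (0 : ℝ)), (EuclideanSpace.single i (1 : ℝ), (0 : ℝ))]) +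
    iteratedFDeriv ℝ 2 U p ![((0 : Ed d), (1 : ℝ)), ((0 : Ed d), (1 : ℝ))]

/-- The Poisson kernel `P_t(x)` for the upper half-space. -/
noncomputable def poissonK (d : ℕ) (t : ℝ) (x : Ed d) : ℝ :=
  Real.Gamma (((d : ℝ) + 1) / 2) / π ^ (((d : ℝ) + 1) / 2) * t *
    (‖x‖ ^ 2 + t ^ 2) ^ (-((d : ℝ) + 1) / 2)

end

section UniformlyDistributed

variable {X : Type*} [MetricSpace X] [SecondCountableTopology X] [MeasurableSpace X]

/-- Balls have positive measure for a nonzero measure all of whose balls of equal radius have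
equal measure. -/
lemma measure_ball_pos_of_uniform {μ : Measure X} (hμ0 : μ ≠ 0)
    (hμ : ∀ x y r, μ (ball x r) = μ (ball y r)) (x : X) {r : ℝ} (hr : 0 < r) :
    0 < μ (ball x r) := by
  rw [pos_iff_ne_zero]
  intro h0
  apply hμ0
  rw [← Measure.measure_univ_eq_zero]
  obtain ⟨s, hs, hs'⟩ := TopologicalSpace.countable_cover_nhds
    (f := fun y : X => ball y r) (fun y => ball_mem_nhds y hr)
  rw [← hs']
  exact (measure_biUnion_null_iff hs).2 fun y _ => by rw [hμ y x r, h0]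

variable [BorelSpace X]

lemma measure_open_le_liminf_mul {μ ν : Measure X} [IsFiniteMeasure μ] [IsFiniteMeasure ν]
    (hν0 : ν ≠ 0) (hμ : ∀ x y r, μ (ball x r) = μ (ball y r))
    (hν : ∀ x y r, ν (ball x r) = ν (ball y r)) (x₀ : X) {U : Set X} (hU : IsOpen U)
    {r : ℕ → ℝ} (hr : ∀ n, 0 < r n) (hr0 : Tendsto r atTop (nhds 0)) :
    μ U ≤ liminf (fun n => μ (ball x₀ (r n)) / ν (ball x₀ (r n))) atTop * ν U := by
  have hpos : ∀ n, ν (ball x₀ (r n)) ≠ 0 := fun n =>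
    (measure_ball_pos_of_uniform hν0 hν x₀ (hr n)).ne'
  have hD : ∀ n, MeasurableSet {p : X × X | p.2 ∈ U ∧ dist p.2 p.1 < r n} := fun n =>
    (hU.measurableSet.preimage measurable_snd).inter
      (measurableSet_lt (measurable_snd.dist measurable_fst) measurable_const)
  have hmeas : ∀ n, Measurable fun x => ν (U ∩ ball x (r n)) := fun n =>
    measurable_measure_prodMk_left (hD n)
  have hswap : ∀ n, ∫⁻ x in U, ν (U ∩ ball x (r n)) ∂μ ≤ μ (ball x₀ (r n)) * ν U := by
    intro n
    have h1 : ∀ x, ν (U ∩ ball x (r n)) =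
        ∫⁻ y in U, (ball x (r n)).indicator 1 y ∂ν := by
      intro x
      rw [lintegral_indicator_one measurableSet_ball, Measure.restrict_apply measurableSet_ball,
        inter_comm]
    simp_rw [h1]
    rw [lintegral_lintegral_swap]
    · calc ∫⁻ y in U, ∫⁻ x in U, (ball x (r n)).indicator 1 y ∂μ ∂ν
          ≤ ∫⁻ y in U, μ (ball x₀ (r n)) ∂ν := by
            refine lintegral_mono fun y => ?_
            have h2 : ∀ x, (ball x (r n)).indicator (1 : X → ℝ≥0∞) y
                = (ball y (r n)).indicator 1 x := fun x => by
              simp only [indicator, mem_ball, dist_comm y x, Pi.one_apply]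
            simp_rw [h2]
            rw [lintegral_indicator_one measurableSet_ball, hμ x₀ y]
            exact Measure.restrict_apply_le _ _
        _ = _ := by rw [setLIntegral_const]
    · refine Measurable.aemeasurable ?_
      have : Function.uncurry (fun x y => (ball x (r n)).indicator (1 : X → ℝ≥0∞) y)
          = {p : X × X | dist p.2 p.1 < r n}.indicator 1 := by
        ext ⟨x, y⟩
        simp [indicator, Function.uncurry]
      rw [this]
      exact measurable_one.indicator
        (measurableSet_lt (measurable_snd.dist measurable_fst) measurable_const)
  calc μ U = ∫⁻ x in U, 1 ∂μ := by simp
    _ ≤ ∫⁻ x in U, liminf (fun n => ν (U ∩ ball x (r n)) / ν (ball x₀ (r n))) atTop ∂μ := by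
        refine setLIntegral_mono_ae' hU.measurableSet (ae_of_all _ fun x hx => ?_)
        refine le_liminf_of_le (by isBoundedDefault) ?_
        obtain ⟨δ, hδ, hball⟩ := Metric.isOpen_iff.1 hU x hx
        filter_upwards [hr0.eventually (gt_mem_nhds hδ)] with n hn
        rw [inter_eq_self_of_subset_right ((ball_subset_ball hn.le).trans hball), hν x x₀,
          ENNReal.div_self (hpos n) (measure_ne_top _ _)]
    _ ≤ liminf (fun n => ∫⁻ x in U, ν (U ∩ ball x (r n)) / ν (ball x₀ (r n)) ∂μ) atTop :=
        lintegral_liminf_le fun n => (hmeas n).div_const _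
    _ ≤ liminf (fun n => μ (ball x₀ (r n)) / ν (ball x₀ (r n)) * ν U) atTop := by
        refine liminf_le_liminf (Eventually.of_forall fun n => ?_)
        simp_rw [div_eq_mul_inv]
        rw [lintegral_mul_const _ (hmeas n), mul_right_comm]
        gcongr
        exact hswap n
    _ = _ := by
        rw [ENNReal.liminf_mul_const_of_ne_top (measure_ne_top _ _), mul_comm]

/-- Two nonzero finite measures for which the measure of a ball depends only on its radius are
proportional. -/
theorem exists_eq_smul_of_uniform {μ ν : Measure X} [IsFiniteMeasure μ] [IsFiniteMeasure ν]
    (hμ0 : μ ≠ 0) (hν0 : ν ≠ 0) (hμ : ∀ x y r, μ (ball x r) = μ (ball y r))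
    (hν : ∀ x y r, ν (ball x r) = ν (ball y r)) :
    ∃ c : ℝ≥0∞, c ≠ 0 ∧ c ≠ ∞ ∧ μ = c • ν := by
  obtain ⟨x₀⟩ : Nonempty X := by
    by_contra h
    rw [not_nonempty_iff] at h
    exact hμ0 (Measure.eq_zero_of_isEmpty μ)
  let r : ℕ → ℝ := fun n => 1 / ((n : ℝ) + 1)
  have hr : ∀ n, 0 < r n := fun n => Nat.one_div_pos_of_nat
  have hr0 : Tendsto r atTop (nhds 0) := tendsto_one_div_add_atTop_nhds_zero_nat
  set c := liminf (fun n => μ (ball x₀ (r n)) / ν (ball x₀ (r n))) atTop with hc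
  have h1 : ∀ U, IsOpen U → μ U ≤ c * ν U := fun U hU =>
    measure_open_le_liminf_mul hν0 hμ hν x₀ hU hr hr0
  have h2 : ∀ U, IsOpen U → ν U ≤ c⁻¹ * μ U := fun U hU => by
    refine (measure_open_le_liminf_mul hμ0 hν hμ x₀ hU hr hr0).trans ?_
    gcongr
    rw [hc, ENNReal.inv_liminf]
    refine (liminf_le_limsup).trans (le_of_eq ?_)
    congr 1
    ext n
    rw [ENNReal.inv_div (Or.inl (measure_ne_top _ _))
      (Or.inl (measure_ball_pos_of_uniform hν0 hν x₀ (hr n)).ne')]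
  have hc0 : c ≠ 0 := fun h => hμ0 (Measure.measure_univ_eq_zero.1 (by
    simpa [h] using h1 univ isOpen_univ))
  have hct : c ≠ ∞ := fun h => hν0 (Measure.measure_univ_eq_zero.1 (by
    simpa [h] using h2 univ isOpen_univ))
  have key : ∀ U, IsOpen U → μ U = (c • ν) U := fun U hU => by
    refine le_antisymm (h1 U hU) ?_
    calc c * ν U ≤ c * (c⁻¹ * μ U) := by gcongr; exact h2 U hU
      _ = μ U := by rw [← mul_assoc, ENNReal.mul_inv_cancel hc0 hct, one_mul]
  refine ⟨c, hc0, hct, ext_of_generate_finite {s | IsOpen s} BorelSpace.measurable_eq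
    isPiSystem_isOpen key (key univ isOpen_univ)⟩

end UniformlyDistributed

/-- A locally Lipschitz image of a compact set has finite Hausdorff measure in the dimension of
the source. -/
lemma hausdorffMeasure_image_lt_top_of_locallyLipschitz {n : ℕ} {E : Type*} [MetricSpace E]
    [MeasurableSpace E] [BorelSpace E] {f : (Fin n → ℝ) → E} (hf : LocallyLipschitz f)
    {K : Set (Fin n → ℝ)} (hK : IsCompact K) : μH[(n : ℝ)] (f '' K) < ∞ := by
  refine hK.induction_on (p := fun s => μH[(n : ℝ)] (f '' s) < ∞) (by simp)
    (fun s t hst ht => (measure_mono (image_mono hst)).trans_lt ht) (fun s t hs ht => ?_)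
    fun x _ => ?_
  · rw [image_union]
    exact (measure_union_le _ _).trans_lt (ENNReal.add_lt_top.2 ⟨hs, ht⟩)
  · obtain ⟨C, t, ht, hC⟩ := hf x
    refine ⟨t ∩ ball x 1, mem_nhdsWithin_of_mem_nhds (inter_mem ht (ball_mem_nhds x one_pos)), ?_⟩
    refine ((hC.mono inter_subset_left).hausdorffMeasure_image_le (Nat.cast_nonneg n)).trans_lt ?_
    refine ENNReal.mul_lt_top (by simp) ?_
    have := hausdorffMeasure_pi_real (ι := Fin n)
    rw [Fintype.card_fin] at this
    rw [this]
    exact (measure_mono inter_subset_right).trans_lt measure_ball_lt_top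

lemma hausdorffMeasure_sphere_lt_top (n : ℕ) :
    μH[(n : ℝ)] (sphere (0 : Ed (n + 1)) 1) < ∞ := by
  let G : Fin (n + 1) → ℝ → (Fin n → ℝ) → Ed (n + 1) := fun i s p =>
    WithLp.toLp 2 (i.insertNth s p : Fin (n + 1) → ℝ)
  let F : Fin (n + 1) → ℝ → (Fin n → ℝ) → Ed (n + 1) := fun i s p => ‖G i s p‖⁻¹ • G i s p
  have hG0 : ∀ i s p, s ≠ 0 → G i s p ≠ 0 := by
    intro i s p hs h
    have : G i s p i = 0 := by rw [h]; rfl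
    simp [G] at this
    exact hs this
  have hG : ∀ i s, ContDiff ℝ 1 (G i s) := by
    intro i s
    rw [contDiff_euclidean]
    rw [i.forall_iff_succAbove]
    constructor
    · simpa [G] using contDiff_const
    · intro j
      simpa [G] using contDiff_apply ℝ ℝ j
  have hF : ∀ i s, s ≠ 0 → LocallyLipschitz (F i s) := by
    intro i s hs
    refine ContDiff.locallyLipschitz (𝕂 := ℝ) ?_
    exact (((hG i s).norm ℝ fun p => hG0 i s p hs).inv
      fun p => norm_ne_zero_iff.2 (hG0 i s p hs)).smul (hG i s)
  have hcover : sphere (0 : Ed (n + 1)) 1 ⊆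
      ⋃ i : Fin (n + 1), (F i 1 '' Icc (-1) 1 ∪ F i (-1) '' Icc (-1) 1) := by
    intro x hx
    have hx1 : ‖x‖ = 1 := by simpa using hx
    obtain ⟨i, hi⟩ := Finite.exists_max fun i => |x i|
    have hxi : 0 < |x i| := by
      rw [abs_pos]
      intro h0
      have : x = 0 := by
        ext j
        have := hi j
        rw [h0, abs_zero] at this
        simpa using abs_nonpos_iff.1 this
      simp [this] at hx1
    have key : ∀ s : ℝ, s * |x i| = x i → x ∈ F i s '' Icc (-1) 1 := by
      intro s hs
      refine ⟨fun j => |x i|⁻¹ * x (i.succAbove j), ?_, ?_⟩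
      · have : ∀ j, |(|x i|)⁻¹ * x (i.succAbove j)| ≤ 1 := fun j => by
          rw [abs_mul, abs_inv, abs_abs, inv_mul_le_one₀ hxi]
          exact hi _
        exact ⟨fun j => (abs_le.1 (this j)).1, fun j => (abs_le.1 (this j)).2⟩
      · have : G i s (fun j => |x i|⁻¹ * x (i.succAbove j)) = |x i|⁻¹ • x := by
          ext k
          revert k
          rw [i.forall_iff_succAbove]
          constructor
          · simp [G]; field_simp; linarith
          · intro j; simp [G]
        simp only [F, this, norm_smul, hx1, smul_smul]
        simp [hxi.ne']
    refine mem_iUnion.2 ⟨i, ?_⟩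
    rcases le_total 0 (x i) with h | h
    · left; exact key 1 (by rw [abs_of_nonneg h, one_mul])
    · right; exact key (-1) (by rw [abs_of_nonpos h]; ring)
  refine (measure_mono hcover).trans_lt ((measure_iUnion_le _).trans_lt ?_)
  rw [tsum_fintype]
  refine ENNReal.sum_lt_top.2 fun i _ => (measure_union_le _ _).trans_lt
    (ENNReal.add_lt_top.2 ⟨?_, ?_⟩)
  · exact hausdorffMeasure_image_lt_top_of_locallyLipschitz (hF i 1 one_ne_zero) isCompact_Icc
  · exact hausdorffMeasure_image_lt_top_of_locallyLipschitz (hF i (-1) (by norm_num)) isCompact_Icc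

lemma hausdorffMeasure_sphere_pos (n : ℕ) :
    0 < μH[(n : ℝ)] (sphere (0 : Ed (n + 1)) 1) := by
  let P : Ed (n + 1) → (Fin n → ℝ) := fun x j => x j.succ
  have hP : LipschitzWith 1 P := by
    refine LipschitzWith.of_dist_le_mul fun x y => ?_
    rw [NNReal.coe_one, one_mul, dist_pi_le_iff dist_nonneg]
    intro j
    simpa [P, dist_eq_norm] using PiLp.norm_apply_le (x - y) j.succ
  have hsub : ball (0 : Fin n → ℝ) (1 / (n + 1)) ⊆ P '' sphere (0 : Ed (n + 1)) 1 := by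
    intro p hp
    have hp' : ∀ j, p j ^ 2 ≤ 1 / (n + 1) := by
      intro j
      have h1 : ‖p j‖ ≤ 1 / (n + 1) := (norm_le_pi_norm p j).trans (mem_ball_zero_iff.1 hp).le
      have h2 : (1 : ℝ) / (n + 1) ≤ 1 := by
        rw [div_le_one (by positivity)]; linarith [(Nat.cast_nonneg n : (0 : ℝ) ≤ n)]
      rw [← sq_abs, ← Real.norm_eq_abs]
      nlinarith [norm_nonneg (p j)]
    have hsum : ∑ j, p j ^ 2 ≤ 1 := by
      calc ∑ j, p j ^ 2 ≤ ∑ j : Fin n, (1 : ℝ) / (n + 1) := Finset.sum_le_sum fun j _ => hp' j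
        _ = n / (n + 1) := by simp [div_eq_mul_inv]
        _ ≤ 1 := by rw [div_le_one (by positivity)]; linarith
    refine ⟨WithLp.toLp 2 (Fin.cons (√(1 - ∑ j, p j ^ 2)) p : Fin (n + 1) → ℝ), ?_, ?_⟩
    · simp only [mem_sphere_zero_iff_norm, EuclideanSpace.norm_eq, Fin.sum_univ_succ]
      simp only [Fin.cons_zero, Fin.cons_succ, Real.norm_eq_abs, sq_abs]
      rw [Real.sq_sqrt (by linarith)]
      simp
    · ext j; simp [P]
  have h := hausdorffMeasure_pi_real (ι := Fin n)
  rw [Fintype.card_fin] at h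
  calc 0 < μH[(n : ℝ)] (ball (0 : Fin n → ℝ) (1 / (n + 1))) := by
        rw [h]; exact measure_ball_pos _ _ (by positivity)
    _ ≤ μH[(n : ℝ)] (P '' sphere (0 : Ed (n + 1)) 1) := measure_mono hsub
    _ ≤ _ := by simpa using hP.hausdorffMeasure_image_le (Nat.cast_nonneg n) (sphere 0 1)

section SphereMeasure

variable {E : Type*} [NormedAddCommGroup E] [InnerProductSpace ℝ E]

lemma exists_linearIsometryEquiv_image_ball_inter_sphere {x y : E} (hx : ‖x‖ = 1)
    (hy : ‖y‖ = 1) (r : ℝ) :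
    ∃ e : E ≃ₗᵢ[ℝ] E, e '' (ball x r ∩ sphere 0 1) = ball y r ∩ sphere 0 1 := by
  refine ⟨(ℝ ∙ (x - y))ᗮ.reflection, ?_⟩
  have h : (ℝ ∙ (x - y))ᗮ.reflection x = y := Submodule.reflection_sub (hx.trans hy.symm)
  rw [image_inter (LinearIsometryEquiv.injective _), LinearIsometryEquiv.image_ball,
    LinearIsometryEquiv.image_sphere, h, map_zero]

lemma image_coe_ball_sphere {E : Type*} [NormedAddCommGroup E] (x : sphere (0 : E) 1) (r : ℝ) :
    ((↑) '' ball x r : Set E) = ball (x : E) r ∩ sphere 0 1 := by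
  ext z
  constructor
  · rintro ⟨z, hz, rfl⟩
    exact ⟨hz, z.2⟩
  · rintro ⟨hz, hz'⟩
    exact ⟨⟨z, hz'⟩, hz, rfl⟩

variable [FiniteDimensional ℝ E] [MeasurableSpace E] [BorelSpace E]

open scoped Pointwise in
lemma toSphere_ball_eq (x y : sphere (0 : E) 1) (r : ℝ) :
    (volume : Measure E).toSphere (ball x r) = (volume : Measure E).toSphere (ball y r) := by
  obtain ⟨e, he⟩ := exists_linearIsometryEquiv_image_ball_inter_sphere
    (norm_eq_of_mem_sphere x) (norm_eq_of_mem_sphere y) r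
  rw [Measure.toSphere_apply' _ measurableSet_ball, Measure.toSphere_apply' _ measurableSet_ball,
    image_coe_ball_sphere, image_coe_ball_sphere, ← he]
  congr 1
  have : Ioo (0 : ℝ) 1 • (e '' (ball (x : E) r ∩ sphere 0 1))
      = e '' (Ioo (0 : ℝ) 1 • (ball (x : E) r ∩ sphere 0 1)) := by
    simp only [← image2_smul]
    rw [image2_image_right, image_image2]
    simp
  rw [this, e.image_eq_preimage_symm, e.symm.measurePreserving.measure_preimage_emb
    e.symm.toHomeomorph.measurableEmbedding]

end SphereMeasure

/-- The Hausdorff measure on the unit sphere is a multiple of the measure in the polar coordinates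
decomposition of the Lebesgue measure. -/
theorem exists_sphMeasure_comap_eq_smul_toSphere {d : ℕ} (hd : 2 ≤ d) :
    ∃ c : ℝ≥0∞, c ≠ 0 ∧ c ≠ ∞ ∧ (sphMeasure d).comap ((↑) : sphere (0 : Ed d) 1 → Ed d) =
      c • (volume : Measure (Ed d)).toSphere := by
  obtain ⟨n, rfl⟩ : ∃ n, d = n + 1 := ⟨d - 1, by omega⟩
  have hdim : sphMeasure (n + 1) = μH[(n : ℝ)] := by
    unfold sphMeasure
    congr 1
    push_cast
    ring
  have happ : ∀ s : Set (sphere (0 : Ed (n + 1)) 1),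
      (sphMeasure (n + 1)).comap ((↑) : sphere (0 : Ed (n + 1)) 1 → Ed (n + 1)) s
        = μH[(n : ℝ)] ((↑) '' s : Set (Ed (n + 1))) := fun s => by
    rw [comap_subtype_coe_apply isClosed_sphere.measurableSet, hdim]
  have huniv := happ univ
  rw [image_univ, Subtype.range_coe] at huniv
  have : IsFiniteMeasure
      ((sphMeasure (n + 1)).comap ((↑) : sphere (0 : Ed (n + 1)) 1 → Ed (n + 1))) :=
    ⟨by rw [huniv]; exact hausdorffMeasure_sphere_lt_top n⟩
  refine exists_eq_smul_of_uniform ?_ (Measure.toSphere_ne_zero _) (fun x y r => ?_)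
    fun x y r => toSphere_ball_eq x y r
  · rw [← Measure.measure_univ_ne_zero, huniv]
    exact (hausdorffMeasure_sphere_pos n).ne'
  · obtain ⟨e, he⟩ := exists_linearIsometryEquiv_image_ball_inter_sphere
      (norm_eq_of_mem_sphere x) (norm_eq_of_mem_sphere y) r
    rw [happ, happ, image_coe_ball_sphere, image_coe_ball_sphere, ← he]
    exact (e.toIsometryEquiv.hausdorffMeasure_image _ _).symm

/-- The kernel of the fractional Laplacian centred at `η`. -/
noncomputable def fracKernel (d : ℕ) (α : ℝ) (η y : Ed d) : ℝ := ‖y - η‖ ^ (-(d : ℝ) - α)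

/-- The points that make an angle at least `ε` with the unit vector `η`. -/
def coneCompl {d : ℕ} (η : Ed d) (ε : ℝ) : Set (Ed d) := {y | ⟪y, η⟫ ≤ ‖y‖ * Real.cos ε}

/-- The extension of `φ` from the unit sphere that is homogeneous of degree `s`. -/
noncomputable def homogExt {d : ℕ} (s : ℝ) (φ : Ed d → ℝ) (y : Ed d) : ℝ :=
  ‖y‖ ^ s * φ (‖y‖⁻¹ • y)

lemma fracKernel_nonneg (d : ℕ) (α : ℝ) (η y : Ed d) : 0 ≤ fracKernel d α η y :=
  Real.rpow_nonneg (norm_nonneg _) _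

lemma measurable_fracKernel (d : ℕ) (α : ℝ) (η : Ed d) : Measurable (fracKernel d α η) :=
  ((measurable_id.sub_const η).norm).pow_const _

lemma measurableSet_coneCompl {d : ℕ} (η : Ed d) (ε : ℝ) : MeasurableSet (coneCompl η ε) :=
  measurableSet_le (by fun_prop) (by fun_prop)

lemma one_add_sq_le_quadratic {r t c : ℝ} (hr : 0 ≤ r) (htc : t ≤ c) (hc : -1 ≤ c) :
    (1 - c) / 2 * (1 + r) ^ 2 ≤ r ^ 2 - 2 * r * t + 1 := by
  nlinarith [mul_le_mul_of_nonneg_left htc hr, mul_nonneg (by linarith : 0 ≤ (1 + c) / 2)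
    (sq_nonneg (1 - r))]

lemma quadratic_rpow_le {d : ℕ} {α r t c : ℝ} (hα : 0 < α) (hr : 0 ≤ r) (htc : t ≤ c)
    (hc : -1 ≤ c) (hc1 : c < 1) :
    (r ^ 2 - 2 * r * t + 1) ^ (-((d : ℝ) + α) / 2) ≤
      ((1 - c) / 2) ^ (-((d : ℝ) + α) / 2) * (1 + r) ^ (-((d : ℝ) + α)) := by
  have h := one_add_sq_le_quadratic hr htc hc
  have h1 : 0 < (1 - c) / 2 := by linarith
  have h2 : 0 < 1 + r := by linarith
  refine (Real.rpow_le_rpow_of_nonpos (by positivity) h ?_).trans (le_of_eq ?_)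
  · have : (0 : ℝ) ≤ d := Nat.cast_nonneg d
    linarith
  · rw [Real.mul_rpow h1.le (by positivity), ← Real.rpow_natCast, ← Real.rpow_mul h2.le]
    congr 2
    push_cast
    ring

lemma norm_sub_sq_of_unit {d : ℕ} {η : Ed d} (hη : ‖η‖ = 1) (y : Ed d) :
    ‖y - η‖ ^ 2 = ‖y‖ ^ 2 - 2 * ⟪y, η⟫ + 1 := by
  rw [norm_sub_sq_real, hη]; ring

lemma fracKernel_smul {d : ℕ} {α : ℝ} {η θ : Ed d} (hη : ‖η‖ = 1) (hθ : ‖θ‖ = 1) (r : ℝ) :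
    fracKernel d α η (r • θ) = (r ^ 2 - 2 * r * ⟪θ, η⟫ + 1) ^ (-((d : ℝ) + α) / 2) := by
  have h : r ^ 2 - 2 * r * ⟪θ, η⟫ + 1 = ‖r • θ - η‖ ^ 2 := by
    rw [norm_sub_sq_of_unit hη, norm_smul, hθ, real_inner_smul_left, mul_one, Real.norm_eq_abs,
      sq_abs]
    ring
  rw [h, ← Real.rpow_natCast, ← Real.rpow_mul (norm_nonneg _), fracKernel]
  congr 1
  push_cast
  ring

lemma fracKernel_eq_quadratic {d : ℕ} {α : ℝ} {η : Ed d} (hη : ‖η‖ = 1) (y : Ed d) :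
    fracKernel d α η y = (‖y‖ ^ 2 - 2 * ⟪y, η⟫ + 1) ^ (-((d : ℝ) + α) / 2) := by
  rw [← norm_sub_sq_of_unit hη, ← Real.rpow_natCast, ← Real.rpow_mul (norm_nonneg _), fracKernel]
  congr 1
  push_cast
  ring

lemma fracKernel_le_of_mem_coneCompl {d : ℕ} {α ε : ℝ} (hα : 0 < α) {η y : Ed d} (hη : ‖η‖ = 1)
    (hε : Real.cos ε < 1) (hy : y ∈ coneCompl η ε) :
    fracKernel d α η y ≤
      ((1 - Real.cos ε) / 2) ^ (-((d : ℝ) + α) / 2) * (1 + ‖y‖) ^ (-((d : ℝ) + α)) := by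
  rw [fracKernel_eq_quadratic hη]
  have h := quadratic_rpow_le (d := d) hα (norm_nonneg y) (le_refl (Real.cos ε))
    (Real.neg_one_le_cos ε) hε
  refine le_trans (Real.rpow_le_rpow_of_nonpos ?_ ?_ ?_) h
  · have := one_add_sq_le_quadratic (norm_nonneg y) (le_refl (Real.cos ε)) (Real.neg_one_le_cos ε)
    have h3 : 0 < (1 - Real.cos ε) / 2 := by linarith
    have h4 : 0 < 1 + ‖y‖ := by positivity
    have : 0 < (1 - Real.cos ε) / 2 * (1 + ‖y‖) ^ 2 := by positivity
    linarith
  · have : ⟪y, η⟫ ≤ ‖y‖ * Real.cos ε := hy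
    linarith
  · have : (0 : ℝ) ≤ d := Nat.cast_nonneg d
    linarith

lemma integrable_one_add_norm_rpow {d : ℕ} {α s : ℝ} (hs : s < α) :
    Integrable fun y : Ed d => (1 + ‖y‖) ^ s * (1 + ‖y‖) ^ (-((d : ℝ) + α)) := by
  have h := integrable_one_add_norm (E := Ed d) (μ := volume) (r := (d : ℝ) + α - s)
    (by simp; linarith)
  refine h.congr (ae_of_all _ fun y => ?_)
  simp only
  rw [← Real.rpow_add (by positivity)]
  congr 1
  ring

/-- Functions of moderate growth are integrable against the kernel on sets where the kernel has
its decay at infinity. -/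
lemma integrableOn_mul_fracKernel {d : ℕ} {α s C C' : ℝ} {η : Ed d} (hs : s < α)
    {F : Ed d → ℝ} (hF : Measurable F) {A : Set (Ed d)} (hA : MeasurableSet A)
    (hFb : ∀ y, |F y| ≤ C * (1 + ‖y‖) ^ s)
    (hK : ∀ y ∈ A, fracKernel d α η y ≤ C' * (1 + ‖y‖) ^ (-((d : ℝ) + α))) :
    IntegrableOn (fun y => F y * fracKernel d α η y) A := by
  refine Integrable.mono' (((integrable_one_add_norm_rpow hs).const_mul (C * C')).integrableOn)
    (hF.mul (measurable_fracKernel d α η)).aestronglyMeasurable ?_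
  filter_upwards [ae_restrict_mem hA] with y hy
  rw [norm_mul, Real.norm_eq_abs, Real.norm_of_nonneg (fracKernel_nonneg d α η y)]
  calc |F y| * fracKernel d α η y
      ≤ (C * (1 + ‖y‖) ^ s) * (C' * (1 + ‖y‖) ^ (-((d : ℝ) + α))) :=
        mul_le_mul (hFb y) (hK y hy) (fracKernel_nonneg _ _ _ _) ((abs_nonneg _).trans (hFb y))
    _ = _ := by ring

lemma integrableOn_uKernel {d : ℕ} (hd : 2 ≤ d) {α s t : ℝ} (hα : 0 < α) (hs0 : 0 ≤ s)
    (hs : s < α) (ht : -1 ≤ t) (ht1 : t < 1) :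
    IntegrableOn (fun r : ℝ => r ^ ((d : ℝ) + s - 1) *
      (r ^ 2 - 2 * r * t + 1) ^ (-((d : ℝ) + α) / 2)) (Ioi 0) := by
  have hd' : (2 : ℝ) ≤ d := by exact_mod_cast hd
  have h := integrable_one_add_norm (E := ℝ) (μ := volume) (r := 1 + α - s)
    (by simp; linarith)
  refine Integrable.mono' (h.const_mul (((1 - t) / 2) ^ (-((d : ℝ) + α) / 2))).integrableOn
    (by fun_prop) ?_
  filter_upwards [ae_restrict_mem measurableSet_Ioi] with r hr
  have hr : 0 < r := hr
  have h1 : 0 < 1 + r := by linarith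
  have hq : 0 ≤ r ^ 2 - 2 * r * t + 1 := by
    have := one_add_sq_le_quadratic hr.le (le_refl t) ht
    have h2 : 0 ≤ (1 - t) / 2 := by linarith
    have : 0 ≤ (1 - t) / 2 * (1 + r) ^ 2 := by positivity
    linarith
  rw [norm_mul, Real.norm_of_nonneg (Real.rpow_nonneg hr.le _),
    Real.norm_of_nonneg (Real.rpow_nonneg hq _), Real.norm_of_nonneg hr.le]
  calc r ^ ((d : ℝ) + s - 1) * (r ^ 2 - 2 * r * t + 1) ^ (-((d : ℝ) + α) / 2)
      ≤ (1 + r) ^ ((d : ℝ) + s - 1) *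
        (((1 - t) / 2) ^ (-((d : ℝ) + α) / 2) * (1 + r) ^ (-((d : ℝ) + α))) := by
        refine mul_le_mul (Real.rpow_le_rpow hr.le (by linarith) (by linarith))
          (quadratic_rpow_le hα hr.le le_rfl ht ht1) (Real.rpow_nonneg hq _) (by positivity)
    _ = ((1 - t) / 2) ^ (-((d : ℝ) + α) / 2) *
        ((1 + r) ^ ((d : ℝ) + s - 1) * (1 + r) ^ (-((d : ℝ) + α))) := by ring
    _ = _ := by
        rw [← Real.rpow_add h1]
        congr 2
        ring

section HomogExt

variable {d : ℕ} {s : ℝ} {φ : Ed d → ℝ}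

lemma norm_inv_smul_mem_unitSphere {y : Ed d} (hy : y ≠ 0) : ‖y‖⁻¹ • y ∈ unitSphere d := by
  simp [unitSphere, norm_smul, hy]

lemma homogExt_zero (hs : 0 < s) : homogExt s φ (0 : Ed d) = 0 := by
  simp [homogExt, Real.zero_rpow hs.ne']

lemma homogExt_of_unit {θ : Ed d} (hθ : ‖θ‖ = 1) : homogExt s φ θ = φ θ := by
  simp [homogExt, hθ]

lemma homogExt_smul {r : ℝ} (hr : 0 < r) (y : Ed d) :
    homogExt s φ (r • y) = r ^ s * homogExt s φ y := by
  unfold homogExt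
  rw [norm_smul, Real.norm_of_nonneg hr.le, Real.mul_rpow hr.le (norm_nonneg _), mul_assoc,
    smul_smul]
  congr 4
  field_simp

lemma exists_abs_homogExt_le (hs : 0 < s) (hφ : ContinuousOn φ (unitSphere d)) :
    ∃ C, 0 ≤ C ∧ ∀ y, |homogExt s φ y| ≤ C * ‖y‖ ^ s := by
  obtain ⟨C, hC⟩ := (isCompact_sphere (0 : Ed d) 1).exists_bound_of_continuousOn hφ
  refine ⟨max C 0, le_max_right _ _, fun y => ?_⟩
  rcases eq_or_ne y 0 with rfl | hy
  · simp [homogExt_zero hs, Real.zero_rpow hs.ne']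
  · rw [homogExt, abs_mul, abs_of_nonneg (Real.rpow_nonneg (norm_nonneg y) s), mul_comm]
    gcongr
    exact (hC _ (norm_inv_smul_mem_unitSphere hy)).trans (le_max_left _ _)

lemma continuous_homogExt (hs : 0 < s) (hφ : ContinuousOn φ (unitSphere d)) :
    Continuous (homogExt s φ) := by
  rw [continuous_iff_continuousAt]
  intro y
  rcases eq_or_ne y 0 with rfl | hy
  · obtain ⟨C, -, hC⟩ := exists_abs_homogExt_le hs hφ
    rw [ContinuousAt, homogExt_zero hs]
    refine squeeze_zero_norm hC ?_
    have : Continuous fun y : Ed d => C * ‖y‖ ^ s :=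
      continuous_const.mul (continuous_norm.rpow_const fun _ => Or.inr hs.le)
    simpa [Real.zero_rpow hs.ne'] using this.tendsto 0
  · have hc : ContinuousOn (homogExt s φ) {0}ᶜ := by
      refine ContinuousOn.mul (continuous_norm.rpow_const fun _ => Or.inr hs.le).continuousOn ?_
      refine hφ.comp (ContinuousOn.smul (continuous_norm.continuousOn.inv₀ fun x hx => ?_)
        continuousOn_id) fun x hx => norm_inv_smul_mem_unitSphere hx
      exact norm_ne_zero_iff.2 hx
    exact hc.continuousAt (isOpen_compl_singleton.mem_nhds hy)

end HomogExt

/-- Integration in polar coordinates. -/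
lemma integrable_and_integral_polar {E : Type*} [NormedAddCommGroup E] [NormedSpace ℝ E]
    [Nontrivial E] [FiniteDimensional ℝ E] [MeasurableSpace E] [BorelSpace E] (μ : Measure E)
    [μ.IsAddHaarMeasure] {g : E → ℝ} (hg : Integrable g μ) :
    Integrable (fun θ : sphere (0 : E) 1 => ∫ r in Ioi (0 : ℝ),
      r ^ (Module.finrank ℝ E - 1) * g (r • (θ : E))) μ.toSphere ∧
    ∫ x, g x ∂μ = ∫ θ : sphere (0 : E) 1, (∫ r in Ioi (0 : ℝ),
      r ^ (Module.finrank ℝ E - 1) * g (r • (θ : E))) ∂μ.toSphere := by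
  set n := Module.finrank ℝ E - 1
  have hmp := μ.measurePreserving_homeomorphUnitSphereProd
  have hemb := (homeomorphUnitSphereProd E).measurableEmbedding
  let G : sphere (0 : E) 1 × Ioi (0 : ℝ) → ℝ := fun p => g (p.2.1 • (p.1 : E))
  have hG : ∀ x : ({(0)}ᶜ : Set E), G (homeomorphUnitSphereProd E x) = g x := fun x => by
    have h : ‖(x : E)‖ ≠ 0 := norm_ne_zero_iff.2 x.2
    simp [G, smul_smul, h]
  have hinner : ∀ θ : sphere (0 : E) 1,
      ∫ r : Ioi (0 : ℝ), G (θ, r) ∂(Measure.volumeIoiPow n) =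
        ∫ r in Ioi (0 : ℝ), r ^ n * g (r • (θ : E)) := fun θ => by
    simp only [Measure.volumeIoiPow, ENNReal.ofReal]
    rw [integral_withDensity_eq_integral_smul,
      integral_subtype_comap measurableSet_Ioi fun a : ℝ => Real.toNNReal (a ^ n) • g (a • (θ : E)),
      setIntegral_congr_fun measurableSet_Ioi fun x hx => ?_]
    · rw [NNReal.smul_def, Real.coe_toNNReal _ (pow_nonneg (le_of_lt hx) _), smul_eq_mul]
    · exact (measurable_subtype_coe.pow_const _).real_toNNReal
  have hint : Integrable G (μ.toSphere.prod (.volumeIoiPow n)) := by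
    rw [← hmp.integrable_comp_emb hemb]
    have : Integrable (fun x : ({(0)}ᶜ : Set E) => g x) (μ.comap (↑)) := by
      have := (integrableOn_iff_comap_subtypeVal (s := ({(0)}ᶜ : Set E)) (f := g) (μ := μ)
        (measurableSet_singleton _).compl).1 hg.integrableOn
      exact this
    exact this.congr (ae_of_all _ fun x => (hG x).symm)
  refine ⟨hint.integral_prod_left.congr (ae_of_all _ fun θ => hinner θ), ?_⟩
  calc ∫ x, g x ∂μ = ∫ x : ({(0)}ᶜ : Set E), g x ∂(μ.comap (↑)) := by
        rw [integral_subtype_comap (measurableSet_singleton _).compl g, restrict_compl_singleton]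
    _ = ∫ p, G p ∂μ.toSphere.prod (.volumeIoiPow n) := by
        rw [← hmp.integral_comp hemb]
        exact integral_congr_ae (ae_of_all _ fun x => (hG x).symm)
    _ = ∫ θ, ∫ r, G (θ, r) ∂(.volumeIoiPow n) ∂μ.toSphere := integral_prod _ hint
    _ = _ := integral_congr_ae (ae_of_all _ fun θ => hinner θ)

lemma exists_abs_homogExt_sub_le {d : ℕ} {s : ℝ} (hs : 0 < s) {φ : Ed d → ℝ}
    (hφ : ContinuousOn φ (unitSphere d)) (a : ℝ) :
    ∃ C, ∀ y, |homogExt s φ y - a| ≤ C * (1 + ‖y‖) ^ s := by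
  obtain ⟨C, hC0, hC⟩ := exists_abs_homogExt_le hs hφ
  refine ⟨C + |a|, fun y => ?_⟩
  have h1 : 1 ≤ (1 + ‖y‖) ^ s := Real.one_le_rpow (by linarith [norm_nonneg y]) hs.le
  have h2 : ‖y‖ ^ s ≤ (1 + ‖y‖) ^ s := Real.rpow_le_rpow (norm_nonneg y) (by linarith) hs.le
  calc |homogExt s φ y - a| ≤ |homogExt s φ y| + |a| := abs_sub _ _
    _ ≤ C * (1 + ‖y‖) ^ s + |a| * (1 + ‖y‖) ^ s := by
        refine add_le_add ((hC y).trans (by gcongr)) ?_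
        exact le_mul_of_one_le_right (abs_nonneg a) h1
    _ = _ := by ring

/-- The spherical representation of the integral of an increment of a homogeneous function. -/
lemma integrable_and_integral_coneCompl {d : ℕ} (hd : 2 ≤ d) {α s ε : ℝ} (hα : 0 < α)
    (hs0 : 0 < s) (hs : s < α) (hε : Real.cos ε < 1) {φ : Ed d → ℝ}
    (hφ : ContinuousOn φ (unitSphere d)) {η : Ed d} (hη : ‖η‖ = 1) :
    Integrable ({θ : sphere (0 : Ed d) 1 | ⟪(θ : Ed d), η⟫ ≤ Real.cos ε}.indicator
      fun θ => φ θ * uKernel d α s ⟪(θ : Ed d), η⟫ - φ η * uKernel d α 0 ⟪(θ : Ed d), η⟫)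
      (volume : Measure (Ed d)).toSphere ∧
    ∫ y in coneCompl η ε, (homogExt s φ y - homogExt s φ η) * fracKernel d α η y =
      ∫ θ, {θ : sphere (0 : Ed d) 1 | ⟪(θ : Ed d), η⟫ ≤ Real.cos ε}.indicator
        (fun θ => φ θ * uKernel d α s ⟪(θ : Ed d), η⟫ - φ η * uKernel d α 0 ⟪(θ : Ed d), η⟫) θ
        ∂(volume : Measure (Ed d)).toSphere := by
  have : Nontrivial (Ed d) := by
    refine ⟨⟨η, 0, ?_⟩⟩
    rintro rfl
    simp at hη
  rw [homogExt_of_unit hη]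
  obtain ⟨C, hC⟩ := exists_abs_homogExt_sub_le hs0 hφ (φ η)
  have hint : IntegrableOn (fun y => (homogExt s φ y - φ η) * fracKernel d α η y)
      (coneCompl η ε) :=
    integrableOn_mul_fracKernel hs ((continuous_homogExt hs0 hφ).measurable.sub_const _)
      (measurableSet_coneCompl η ε) hC fun y hy => fracKernel_le_of_mem_coneCompl hα hη hε hy
  rw [← integrable_indicator_iff (measurableSet_coneCompl η ε)] at hint
  rw [← integral_indicator (measurableSet_coneCompl η ε)]
  obtain ⟨h1, h2⟩ := integrable_and_integral_polar volume hint
  have key : ∀ θ : sphere (0 : Ed d) 1, ∫ r in Ioi (0 : ℝ),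
      r ^ (Module.finrank ℝ (Ed d) - 1) * (coneCompl η ε).indicator
        (fun y => (homogExt s φ y - φ η) * fracKernel d α η y) (r • (θ : Ed d)) =
      {θ : sphere (0 : Ed d) 1 | ⟪(θ : Ed d), η⟫ ≤ Real.cos ε}.indicator
        (fun θ => φ θ * uKernel d α s ⟪(θ : Ed d), η⟫ - φ η * uKernel d α 0 ⟪(θ : Ed d), η⟫) θ := by
    intro θ
    have hθ : ‖(θ : Ed d)‖ = 1 := norm_eq_of_mem_sphere θ
    have hmem : ∀ r : ℝ, 0 < r → (r • (θ : Ed d) ∈ coneCompl η ε ↔ ⟪(θ : Ed d), η⟫ ≤ Real.cos ε) := by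
      intro r hr
      simp only [coneCompl, mem_ofPred_eq, real_inner_smul_left, norm_smul, hθ, mul_one,
        Real.norm_of_nonneg hr.le]
      exact mul_le_mul_iff_right₀ hr
    by_cases ht : ⟪(θ : Ed d), η⟫ ≤ Real.cos ε
    · rw [indicator_of_mem (show θ ∈ {θ : sphere (0 : Ed d) 1 | ⟪(θ : Ed d), η⟫ ≤ Real.cos ε} from ht)]
      have ht1 : -1 ≤ ⟪(θ : Ed d), η⟫ := by
        have := abs_real_inner_le_norm (θ : Ed d) η
        rw [hθ, hη, mul_one] at this
        exact (abs_le.1 this).1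
      have i1 := integrableOn_uKernel hd hα hs0.le hs ht1 (ht.trans_lt hε)
      have i2 := integrableOn_uKernel hd hα le_rfl hα ht1 (ht.trans_lt hε)
      simp only [uKernel]
      rw [← integral_const_mul, ← integral_const_mul,
        ← integral_sub (i1.const_mul _) (i2.const_mul _)]
      refine setIntegral_congr_fun measurableSet_Ioi fun r hr => ?_
      have hr : 0 < r := hr
      rw [indicator_of_mem ((hmem r hr).2 ht), homogExt_smul hr, homogExt_of_unit hθ,
        fracKernel_smul hη hθ, finrank_euclideanSpace, Fintype.card_fin]
      have e1 : r ^ ((d : ℝ) + s - 1) = r ^ (d - 1) * r ^ s := by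
        rw [← Real.rpow_natCast, ← Real.rpow_add hr, Nat.cast_sub (by omega)]
        congr 1
        push_cast
        ring
      have e2 : r ^ ((d : ℝ) + 0 - 1) = r ^ (d - 1) := by
        rw [← Real.rpow_natCast, Nat.cast_sub (by omega)]
        congr 1
        push_cast
        ring
      rw [e1, e2]
      ring
    · rw [indicator_of_notMem (show θ ∉ {θ : sphere (0 : Ed d) 1 | ⟪(θ : Ed d), η⟫ ≤ Real.cos ε} from ht)]
      refine (setIntegral_congr_fun measurableSet_Ioi fun r hr => ?_).trans (integral_zero _ _)
      rw [indicator_of_notMem (fun h => ht ((hmem r hr).1 h)), mul_zero]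
  exact ⟨h1.congr (ae_of_all _ key), h2.trans (integral_congr_ae (ae_of_all _ key))⟩

lemma fracConst_pos {d : ℕ} {α : ℝ} (hα : 0 < α) (hα2 : α < 2) : 0 < fracConst d α := by
  have h1 : 0 < Real.Gamma (((d : ℝ) + α) / 2) := Real.Gamma_pos_of_pos (by positivity)
  have h2 : 0 < Real.Gamma (1 - α / 2) := Real.Gamma_pos_of_pos (by linarith)
  have := Real.pi_pos
  unfold fracConst
  positivity

lemma tendsto_cos_nhdsGT_zero : Tendsto Real.cos (nhdsWithin 0 (Ioi 0)) (nhds 1) := by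
  have := Real.continuous_cos.tendsto 0
  rw [Real.cos_zero] at this
  exact this.mono_left nhdsWithin_le_nhds

lemma eventually_cos_lt_one : ∀ᶠ ε in nhdsWithin (0 : ℝ) (Ioi 0), Real.cos ε < 1 := by
  filter_upwards [Ioo_mem_nhdsGT Real.pi_pos] with ε hε
  simpa using Real.cos_lt_cos_of_nonneg_of_le_pi le_rfl hε.2.le hε.1

/-- The integrals of increments of the homogeneous extension over the complements of shrinking
cones converge to a positive multiple of the spherical operator. -/
theorem tendsto_integral_coneCompl_homogExt {d : ℕ} (hd : 2 ≤ d) {α s L : ℝ} (hα : 0 < α)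
    (hα2 : α < 2) (hs0 : 0 < s) (hs : s < α) {φ : Ed d → ℝ} (hφ : ContinuousOn φ (unitSphere d))
    {η : Ed d} (hη : ‖η‖ = 1) (hL : sphFracLapAt d α φ η L)
    (hR : IntegrableOn (RopIntegrand d α s φ η) (unitSphere d) (sphMeasure d)) :
    ∃ c, 0 < c ∧ Tendsto (fun ε => ∫ y in coneCompl η ε,
      (homogExt s φ y - homogExt s φ η) * fracKernel d α η y) (nhdsWithin 0 (Ioi 0))
      (nhds (c * (L + Rop d α s φ η))) := by
  obtain ⟨c, hc0, hct, hc⟩ := exists_sphMeasure_comap_eq_smul_toSphere hd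
  set σ := (volume : Measure (Ed d)).toSphere
  have hk : 0 < c.toReal := ENNReal.toReal_pos hc0 hct
  set k := c.toReal
  have hA := fracConst_pos (d := d) hα hα2
  set A := fracConst d α
  have hS : MeasurableSet (unitSphere d) := isClosed_sphere.measurableSet
  have hconv : ∀ F : Ed d → ℝ,
      ∫ θ in unitSphere d, F θ ∂(sphMeasure d) = k * ∫ θ : sphere (0 : Ed d) 1, F θ ∂σ := by
    intro F
    rw [← integral_subtype_comap hS]
    change ∫ θ : sphere (0 : Ed d) 1, F θ ∂((sphMeasure d).comap (↑)) = _
    rw [hc, integral_smul_measure, smul_eq_mul]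
  have hconvSet : ∀ (F : Ed d → ℝ) (t : ℝ),
      ∫ θ in {θ : Ed d | θ ∈ unitSphere d ∧ ⟪θ, η⟫ ≤ t}, F θ ∂(sphMeasure d) =
        k * ∫ θ, {θ : sphere (0 : Ed d) 1 | ⟪(θ : Ed d), η⟫ ≤ t}.indicator (fun θ => F θ) θ ∂σ := by
    intro F t
    have hY : MeasurableSet {θ : Ed d | ⟪θ, η⟫ ≤ t} :=
      measurableSet_le (by fun_prop) measurable_const
    have : {θ : Ed d | θ ∈ unitSphere d ∧ ⟪θ, η⟫ ≤ t} =
      unitSphere d ∩ {θ : Ed d | ⟪θ, η⟫ ≤ t} := rfl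
    rw [this, ← setIntegral_indicator hY, hconv]
    rfl
  have hRσ : Integrable (fun θ : sphere (0 : Ed d) 1 => RopIntegrand d α s φ η θ) σ := by
    have h := (integrableOn_iff_comap_subtypeVal hS).1 hR
    change Integrable (fun θ : sphere (0 : Ed d) 1 => RopIntegrand d α s φ η θ)
      ((sphMeasure d).comap (↑)) at h
    rw [hc] at h
    exact (integrable_smul_measure hc0 hct).1 h
  have hX : ∀ t, MeasurableSet {θ : sphere (0 : Ed d) 1 | ⟪(θ : Ed d), η⟫ ≤ t} := fun t =>
    measurableSet_le (by fun_prop) measurable_const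
  have hnull : σ {(⟨η, by simpa using hη⟩ : sphere (0 : Ed d) 1)} = 0 := by
    have hd' : 0 < (d : ℝ) - 1 := by
      have : (2 : ℝ) ≤ d := by exact_mod_cast hd
      linarith
    have := Measure.nullSingletonClass_hausdorff (Ed d) hd'
    have h : (sphMeasure d).comap ((↑) : sphere (0 : Ed d) 1 → Ed d)
        {(⟨η, by simpa using hη⟩ : sphere (0 : Ed d) 1)} = 0 := by
      rw [comap_subtype_coe_apply isClosed_sphere.measurableSet, image_singleton, sphMeasure]
      exact measure_singleton _
    rw [hc] at h
    simpa [hc0] using h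
  have hlim2 : Tendsto (fun ε => ∫ θ, {θ : sphere (0 : Ed d) 1 |
      ⟪(θ : Ed d), η⟫ ≤ Real.cos ε}.indicator (fun θ => RopIntegrand d α s φ η θ) θ ∂σ)
      (nhdsWithin 0 (Ioi 0)) (nhds (∫ θ : sphere (0 : Ed d) 1, RopIntegrand d α s φ η θ ∂σ)) := by
    refine tendsto_integral_filter_of_dominated_convergence
      (fun θ : sphere (0 : Ed d) 1 => ‖RopIntegrand d α s φ η θ‖)
      (Eventually.of_forall fun ε => (hRσ.indicator (hX _)).aestronglyMeasurable)
      (Eventually.of_forall fun ε => ae_of_all _ fun θ => norm_indicator_le_norm_self _ _)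
      hRσ.norm ?_
    filter_upwards [measure_eq_zero_iff_ae_notMem.1 hnull] with θ hθ
    have hlt : ⟪(θ : Ed d), η⟫ < 1 := by
      refine inner_lt_one_iff_real_of_norm_eq_one (norm_eq_of_mem_sphere θ) hη |>.2 fun h => hθ ?_
      exact Subtype.ext h
    refine tendsto_const_nhds.congr' ?_
    filter_upwards [tendsto_cos_nhdsGT_zero.eventually (lt_mem_nhds hlt)] with ε hε
    rw [indicator_of_mem (show θ ∈ {θ : sphere (0 : Ed d) 1 | ⟪(θ : Ed d), η⟫ ≤ Real.cos ε} from hε.le)]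
  have hRop : Rop d α s φ η = A * k * ∫ θ : sphere (0 : Ed d) 1, RopIntegrand d α s φ η θ ∂σ := by
    rw [Rop, hconv, mul_assoc]
  refine ⟨(A * k)⁻¹, by positivity, ?_⟩
  have hlim := (hL.const_mul (A * k)⁻¹).add hlim2
  have hval : (A * k)⁻¹ * (L + Rop d α s φ η) = (A * k)⁻¹ * L +
      ∫ θ : sphere (0 : Ed d) 1, RopIntegrand d α s φ η θ ∂σ := by
    rw [hRop]
    field_simp
  rw [hval]
  refine hlim.congr' ?_
  filter_upwards [eventually_cos_lt_one] with ε hε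
  obtain ⟨h1, h2⟩ := integrable_and_integral_coneCompl hd hα hs0 hs hε hφ hη
  have hR' := hRσ.indicator (hX (Real.cos ε))
  have hsplit : {θ : sphere (0 : Ed d) 1 | ⟪(θ : Ed d), η⟫ ≤ Real.cos ε}.indicator
        (fun θ => (φ θ - φ η) * uKernel d α 0 ⟪(θ : Ed d), η⟫) =
      fun θ => {θ : sphere (0 : Ed d) 1 | ⟪(θ : Ed d), η⟫ ≤ Real.cos ε}.indicator
        (fun θ => φ θ * uKernel d α s ⟪(θ : Ed d), η⟫ - φ η * uKernel d α 0 ⟪(θ : Ed d), η⟫) θ -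
        {θ : sphere (0 : Ed d) 1 | ⟪(θ : Ed d), η⟫ ≤ Real.cos ε}.indicator
          (fun θ => RopIntegrand d α s φ η θ) θ := by
    ext θ
    by_cases hθ : ⟪(θ : Ed d), η⟫ ≤ Real.cos ε
    · simp only [indicator, mem_ofPred_eq, hθ, if_true, RopIntegrand]
      ring
    · simp [indicator, hθ]
  rw [h2, hconvSet, hsplit, integral_sub h1 hR']
  field_simp
  ring

/-- A function with vanishing first-order jet is quadratically small. -/
lemma exists_abs_le_sq_of_contDiffAt {E : Type*} [NormedAddCommGroup E] [NormedSpace ℝ E]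
    {f : E → ℝ} {x : E} (hf : ContDiffAt ℝ 2 f x) (h0 : f x = 0) (h1 : fderiv ℝ f x = 0) :
    ∃ C δ, 0 < δ ∧ ∀ y, ‖y - x‖ < δ → |f y| ≤ C * ‖y - x‖ ^ 2 := by
  obtain ⟨K, t, ht, hK⟩ := (hf.fderiv_right (m := 1) (by norm_num)).exists_lipschitzOnWith
  have hdiff : ∀ᶠ y in nhds x, DifferentiableAt ℝ f y := by
    filter_upwards [hf.eventually (by simp)] with y hy
    exact hy.differentiableAt (by simp)
  obtain ⟨δ, hδ, hball⟩ := Metric.mem_nhds_iff.1 (inter_mem ht hdiff)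
  refine ⟨K, δ, hδ, fun y hy => ?_⟩
  have hsub : closedBall x ‖y - x‖ ⊆ ball x δ := closedBall_subset_ball hy
  have h := (convex_closedBall x ‖y - x‖).norm_image_sub_le_of_norm_fderiv_le (𝕜 := ℝ) (f := f)
    (C := K * ‖y - x‖) (x := x) (y := y) (fun z hz => (hball (hsub hz)).2) (fun z hz => ?_)
    (mem_closedBall_self (norm_nonneg _)) (by simp [dist_eq_norm])
  · rw [h0, sub_zero, Real.norm_eq_abs] at h
    linarith
  · have := hK.norm_sub_le (hball (hsub hz)).1 (mem_of_mem_nhds ht)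
    rw [h1, sub_zero] at this
    refine this.trans ?_
    have hz' : ‖z - x‖ ≤ ‖y - x‖ := by simpa [dist_eq_norm] using hz
    gcongr

lemma integrableOn_norm_sub_rpow_ball {d : ℕ} (hd : 2 ≤ d) {s : ℝ} (hs : -(d : ℝ) < s) (η : Ed d)
    (δ : ℝ) : IntegrableOn (fun y => ‖y - η‖ ^ s) (ball η δ) := by
  have : Nontrivial (Ed d) := by
    have : Nonempty (Fin d) := ⟨⟨0, by omega⟩⟩
    infer_instance
  have h : IntegrableOn (fun y : Ed d => ‖y‖ ^ s) (ball 0 δ) := by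
    rw [integrableOn_fun_norm_addHaar volume (f := fun r => r ^ s)]
    have h2 : IntegrableOn (fun r : ℝ => r ^ ((d : ℝ) - 1 + s)) (Ioo 0 δ) := by
      rcases le_or_gt δ 0 with h | h
      · simp [Ioo_eq_empty_of_le h]
      · exact (intervalIntegral.integrableOn_Ioo_rpow_iff h).2 (by linarith)
    refine h2.congr_fun (fun r hr => ?_) measurableSet_Ioo
    simp only [finrank_euclideanSpace, Fintype.card_fin, smul_eq_mul]
    rw [Real.rpow_add hr.1, ← Real.rpow_natCast, Nat.cast_sub (by omega)]
    simp
  have hmp := measurePreserving_sub_right (volume : Measure (Ed d)) η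
  have := (hmp.integrableOn_comp_preimage (MeasurableEquiv.subRight η).measurableEmbedding).2 h
  convert! this using 1
  ext y
  simp [dist_eq_norm]

lemma fracKernel_le_of_le_norm_sub {d : ℕ} {α δ : ℝ} (hα : 0 < α) (hδ : 0 < δ) {η y : Ed d}
    (hη : ‖η‖ = 1) (hy : δ ≤ ‖y - η‖) :
    fracKernel d α η y ≤ (2 / δ + 1) ^ ((d : ℝ) + α) * (1 + ‖y‖) ^ (-((d : ℝ) + α)) := by
  have h0 : 0 < ‖y - η‖ := hδ.trans_le hy
  have h1 : 1 + ‖y‖ ≤ (2 / δ + 1) * ‖y - η‖ := by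
    have : ‖y‖ ≤ ‖y - η‖ + 1 := by
      have := norm_add_le (y - η) η
      rwa [sub_add_cancel, hη] at this
    have : 2 ≤ 2 / δ * ‖y - η‖ := by
      rw [div_mul_eq_mul_div, le_div_iff₀ hδ]
      linarith
    linarith
  rw [fracKernel, show -(d : ℝ) - α = -((d : ℝ) + α) by ring, Real.rpow_neg h0.le,
    Real.rpow_neg (by positivity), ← div_eq_mul_inv, inv_eq_one_div,
    div_le_div_iff₀ (by positivity) (by positivity), one_mul,
    ← Real.mul_rpow (by positivity) h0.le]
  exact Real.rpow_le_rpow (by positivity) h1 (by positivity)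

lemma integrable_mul_fracKernel_of_sq {d : ℕ} (hd : 2 ≤ d) {α s C C' δ : ℝ} (hα : 0 < α)
    (hα2 : α < 2) (hs : s < α) {η : Ed d} (hη : ‖η‖ = 1) {F : Ed d → ℝ} (hF : Measurable F)
    (hFb : ∀ y, |F y| ≤ C * (1 + ‖y‖) ^ s) (hδ : 0 < δ)
    (hFs : ∀ y, ‖y - η‖ < δ → |F y| ≤ C' * ‖y - η‖ ^ 2) :
    Integrable fun y => F y * fracKernel d α η y := by
  have : Nonempty (Fin d) := ⟨⟨0, by omega⟩⟩
  rw [← integrableOn_univ, ← union_compl_self (ball η δ)]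
  refine IntegrableOn.union ?_ (integrableOn_mul_fracKernel hs hF measurableSet_ball.compl hFb
    fun y hy => fracKernel_le_of_le_norm_sub hα hδ hη ?_)
  · have h := (integrableOn_norm_sub_rpow_ball hd (s := 2 - d - α) (by linarith) η δ).const_mul C'
    refine Integrable.mono' h (hF.mul (measurable_fracKernel d α η)).aestronglyMeasurable ?_
    filter_upwards [self_mem_ae_restrict measurableSet_ball, ae_restrict_of_ae
      (measure_eq_zero_iff_ae_notMem.1 (measure_singleton (μ := volume) η))] with y hy hne
    have hy0 : 0 < ‖y - η‖ := norm_pos_iff.2 (sub_ne_zero.2 hne)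
    rw [norm_mul, Real.norm_eq_abs, Real.norm_of_nonneg (fracKernel_nonneg d α η y)]
    refine (mul_le_mul_of_nonneg_right (hFs y (by simpa [dist_eq_norm] using hy))
      (fracKernel_nonneg d α η y)).trans_eq ?_
    rw [fracKernel, mul_assoc, ← Real.rpow_natCast, ← Real.rpow_add hy0]
    congr 2
    push_cast
    ring
  · simpa [dist_eq_norm] using hy

lemma tendsto_setIntegral_of_ae_eventually_mem {X : Type*} [MeasurableSpace X] {μ : Measure X}
    {G : X → ℝ} (hG : Integrable G μ) {A : ℝ → Set X} (hA : ∀ ε, MeasurableSet (A ε))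
    (hmem : ∀ᵐ y ∂μ, ∀ᶠ ε in nhdsWithin (0 : ℝ) (Ioi 0), y ∈ A ε) :
    Tendsto (fun ε => ∫ y in A ε, G y ∂μ) (nhdsWithin 0 (Ioi 0)) (nhds (∫ y, G y ∂μ)) := by
  simp_rw [← integral_indicator (hA _)]
  refine tendsto_integral_filter_of_dominated_convergence (fun y => ‖G y‖)
    (Eventually.of_forall fun ε => (hG.indicator (hA _)).aestronglyMeasurable)
    (Eventually.of_forall fun ε => ae_of_all _ fun y => norm_indicator_le_norm_self _ _)
    hG.norm ?_
  filter_upwards [hmem] with y hy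
  refine tendsto_const_nhds.congr' ?_
  filter_upwards [hy] with ε hε
  rw [indicator_of_mem hε]

lemma ae_eventually_mem_coneCompl {d : ℕ} (hd : 2 ≤ d) {η : Ed d} (hη : ‖η‖ = 1) :
    ∀ᵐ y : Ed d, ∀ᶠ ε in nhdsWithin (0 : ℝ) (Ioi 0), y ∈ coneCompl η ε := by
  have hne : (ℝ ∙ η) ≠ ⊤ := by
    intro h
    have h1 := finrank_span_le_card (R := ℝ) ({η} : Set (Ed d))
    rw [h, finrank_top] at h1
    simp at h1
    omega
  filter_upwards [measure_eq_zero_iff_ae_notMem.1 (Measure.addHaar_submodule volume _ hne)] with y hy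
  have hlt : ⟪y, η⟫ < ‖y‖ * 1 := by
    rw [← hη]
    refine inner_lt_norm_mul_iff_real.2 fun h => hy ?_
    rw [hη, one_smul] at h
    rw [SetLike.mem_coe, h]
    exact Submodule.smul_mem _ _ (Submodule.mem_span_singleton_self η)
  filter_upwards [(tendsto_cos_nhdsGT_zero.const_mul ‖y‖).eventually (lt_mem_nhds hlt)] with ε hε
  exact hε.le

lemma ae_eventually_lt_norm_sub {d : ℕ} (hd : 2 ≤ d) (η : Ed d) :
    ∀ᵐ y : Ed d, ∀ᶠ ε in nhdsWithin (0 : ℝ) (Ioi 0), y ∈ {y : Ed d | ε < ‖y - η‖} := by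
  have : Nonempty (Fin d) := ⟨⟨0, by omega⟩⟩
  filter_upwards [measure_eq_zero_iff_ae_notMem.1 (measure_singleton (μ := volume) η)] with y hne
  have hy0 : 0 < ‖y - η‖ := norm_pos_iff.2 (sub_ne_zero.2 hne)
  exact nhdsWithin_le_nhds (gt_mem_nhds hy0)

/-- The linear functional `⟪w, ·⟫` is odd under the reflection through the line spanned by `η`. -/
lemma setIntegral_inner_mul_fracKernel_eq_zero {d : ℕ} {α : ℝ} {η w : Ed d}
    (hw : ⟪w, η⟫ = 0) {A : Set (Ed d)} (hA : (ℝ ∙ η).reflection ⁻¹' A = A) :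
    ∫ y in A, ⟪w, y⟫ * fracKernel d α η y = 0 := by
  set R := (ℝ ∙ η).reflection
  have hRη : R η = η := Submodule.reflection_mem_subspace_eq_self
    (Submodule.mem_span_singleton_self η)
  have h := R.measurePreserving.setIntegral_preimage_emb
    R.toHomeomorph.measurableEmbedding (fun y => ⟪w, y⟫ * fracKernel d α η y) A
  rw [hA] at h
  have hodd : ∀ y, ⟪w, R y⟫ * fracKernel d α η (R y) = -(⟪w, y⟫ * fracKernel d α η y) := by
    intro y
    have h1 : ‖R y - η‖ = ‖y - η‖ := by
      conv_lhs => rw [← hRη, ← map_sub, R.norm_map]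
    have h2 : ⟪w, R y⟫ = -⟪w, y⟫ := by
      simp only [R]
      rw [Submodule.reflection_singleton_apply, inner_sub_right, two_smul, inner_add_right,
        inner_smul_right, hw]
      simp
    rw [fracKernel, fracKernel, h1, h2, neg_mul]
  simp_rw [hodd] at h
  rw [integral_neg] at h
  linarith

lemma reflection_preimage_coneCompl {d : ℕ} {η : Ed d} (ε : ℝ) :
    (ℝ ∙ η).reflection ⁻¹' coneCompl η ε = coneCompl η ε := by
  ext y
  have hRη : (ℝ ∙ η).reflection η = η := Submodule.reflection_mem_subspace_eq_self
    (Submodule.mem_span_singleton_self η)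
  have : ⟪(ℝ ∙ η).reflection y, η⟫ = ⟪y, η⟫ := by
    have := (ℝ ∙ η).reflection.inner_map_map y η
    rwa [hRη] at this
  simp only [coneCompl, mem_preimage, mem_ofPred_eq, this, LinearIsometryEquiv.norm_map]

lemma reflection_preimage_lt_norm_sub {d : ℕ} {η : Ed d} (ε : ℝ) :
    (ℝ ∙ η).reflection ⁻¹' {y | ε < ‖y - η‖} = {y | ε < ‖y - η‖} := by
  ext y
  have hRη : (ℝ ∙ η).reflection η = η := Submodule.reflection_mem_subspace_eq_self
    (Submodule.mem_span_singleton_self η)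
  have : ‖(ℝ ∙ η).reflection y - η‖ = ‖y - η‖ := by
    have := (ℝ ∙ η).reflection.norm_map (y - η)
    rwa [map_sub, hRη] at this
  simp only [mem_preimage, mem_ofPred_eq, this]

/-- An annulus around the unit sphere. -/
def annulus (d : ℕ) : Set (Ed d) := {y | 1 / 2 < ‖y‖ ∧ ‖y‖ < 2}

lemma isOpen_annulus (d : ℕ) : IsOpen (annulus d) :=
  (isOpen_lt continuous_const continuous_norm).inter (isOpen_lt continuous_norm continuous_const)

lemma reflection_preimage_annulus {d : ℕ} {η : Ed d} :
    (ℝ ∙ η).reflection ⁻¹' annulus d = annulus d := by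
  ext y
  simp [annulus]

lemma inversion_eq_inversion {d : ℕ} : inversion d = EuclideanGeometry.inversion (0 : Ed d) 1 := by
  ext1 y
  simp [inversion, EuclideanGeometry.inversion]

lemma inversion_inversion_self {d : ℕ} (y : Ed d) : inversion d (inversion d y) = y := by
  rw [inversion_eq_inversion]
  exact EuclideanGeometry.inversion_inversion _ one_ne_zero y

lemma norm_inversion {d : ℕ} (y : Ed d) : ‖inversion d y‖ = ‖y‖⁻¹ := by
  have := EuclideanGeometry.dist_inversion_center (0 : Ed d) y 1
  simpa [inversion_eq_inversion] using this

lemma norm_inversion_sub {d : ℕ} {η y : Ed d} (hη : ‖η‖ = 1) (hy : y ≠ 0) :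
    ‖inversion d y - η‖ = ‖y - η‖ / ‖y‖ := by
  have hη0 : η ≠ 0 := by
    rintro rfl
    simp at hη
  have := EuclideanGeometry.dist_inversion_inversion hy hη0 1
  rw [EuclideanGeometry.inversion_of_mem_sphere (c := (0 : Ed d)) (R := 1) (x := η)
    (by simpa using hη)] at this
  rw [inversion_eq_inversion, ← dist_eq_norm, this]
  simp [hη, dist_eq_norm]
  ring

/-- The function `‖y‖ ^ (α - d) - 1` is odd under the inversion, up to the conformal factor. -/
lemma setIntegral_image_inversion {d : ℕ} {α : ℝ} {η : Ed d} (hη : ‖η‖ = 1) {A : Set (Ed d)}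
    (hA : MeasurableSet A) (h0 : (0 : Ed d) ∉ A) :
    ∫ y in inversion d '' A, (‖y‖ ^ (α - d) - 1) * fracKernel d α η y =
      -∫ y in A, (‖y‖ ^ (α - d) - 1) * fracKernel d α η y := by
  have hne : ∀ y ∈ A, y ≠ 0 := fun y hy h => h0 (h ▸ hy)
  rw [inversion_eq_inversion, integral_image_eq_integral_abs_det_fderiv_smul volume hA
    (fun y hy => (EuclideanGeometry.hasFDerivAt_inversion (hne y hy)).hasFDerivWithinAt)
    (EuclideanGeometry.inversion_injective _ one_ne_zero).injOn, ← integral_neg,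
    ← inversion_eq_inversion]
  refine setIntegral_congr_fun hA fun y hy => ?_
  have hy0 := hne y hy
  have hn : 0 < ‖y‖ := norm_pos_iff.2 hy0
  have hdet : |(((1 : ℝ) / dist y 0) ^ 2 • ((ℝ ∙ (y - 0))ᗮ.reflection : Ed d →L[ℝ] Ed d)).det| =
      ‖y‖ ^ (-2 * (d : ℝ)) := by
    rw [ContinuousLinearMap.det, ContinuousLinearMap.toLinearMap_smul, LinearMap.det_smul, abs_mul]
    have h1 : |LinearMap.det (((ℝ ∙ (y - 0))ᗮ.reflection : Ed d →L[ℝ] Ed d) : Ed d →ₗ[ℝ] Ed d)| = 1 := by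
      have := Submodule.det_reflection (ℝ ∙ (y - 0))ᗮ
      refine (congrArg abs this).trans ?_
      simp
    rw [h1, mul_one, dist_zero_right, finrank_euclideanSpace, Fintype.card_fin,
      abs_of_nonneg (by positivity), one_div, inv_pow, inv_pow, ← pow_mul, ← Real.rpow_natCast,
      ← Real.rpow_neg hn.le]
    push_cast
    ring_nf
  rw [hdet, fracKernel, fracKernel, norm_inversion_sub hη hy0, norm_inversion, smul_eq_mul,
    Real.div_rpow (norm_nonneg _) hn.le, Real.inv_rpow hn.le]
  have e1 : ‖y‖ ^ (-2 * (d : ℝ)) = ‖y‖ ^ (α - d) * ‖y‖ ^ (-(d : ℝ) - α) := by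
    rw [← Real.rpow_add hn]
    ring_nf
  rw [e1]
  have := (Real.rpow_pos_of_pos hn (α - d)).ne'
  have := (Real.rpow_pos_of_pos hn (-(d : ℝ) - α)).ne'
  field_simp
  ring

lemma inversion_mem_annulus {d : ℕ} {y : Ed d} (hy : y ∈ annulus d) :
    inversion d y ∈ annulus d := by
  obtain ⟨h1, h2⟩ := hy
  have h0 : 0 < ‖y‖ := by linarith
  refine ⟨?_, ?_⟩ <;> rw [norm_inversion]
  · rw [one_div]
    exact inv_strictAnti₀ h0 h2
  · rw [inv_lt_comm₀ h0 two_pos]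
    linarith

lemma inversion_image_coneCompl_inter_annulus {d : ℕ} {η : Ed d} (ε : ℝ) :
    inversion d '' (coneCompl η ε ∩ annulus d) = coneCompl η ε ∩ annulus d := by
  have hsub : ∀ y ∈ coneCompl η ε ∩ annulus d, inversion d y ∈ coneCompl η ε ∩ annulus d := by
    rintro y ⟨h1, h2⟩
    refine ⟨?_, inversion_mem_annulus h2⟩
    have h0 : 0 < ‖y‖ := by linarith [h2.1]
    have h1 : ⟪y, η⟫ ≤ ‖y‖ * Real.cos ε := h1
    change ⟪inversion d y, η⟫ ≤ ‖inversion d y‖ * Real.cos ε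
    rw [norm_inversion, inversion, real_inner_smul_left]
    calc (‖y‖ ^ 2)⁻¹ * ⟪y, η⟫ ≤ (‖y‖ ^ 2)⁻¹ * (‖y‖ * Real.cos ε) := by gcongr
      _ = ‖y‖⁻¹ * Real.cos ε := by field_simp
  refine Subset.antisymm (image_subset_iff.2 hsub) fun y hy => ⟨_, hsub y hy, ?_⟩
  exact inversion_inversion_self y

lemma exists_abs_norm_rpow_sub_one_le {d : ℕ} (a : ℝ) {η : Ed d} (hη : ‖η‖ = 1) :
    ∃ C, 0 ≤ C ∧ ∀ y ∈ annulus d, |‖y‖ ^ a - 1| ≤ C * ‖y - η‖ := by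
  have hcont : ContinuousOn (fun t : ℝ => a * t ^ (a - 1)) (Icc (1 / 2) 2) := by
    refine continuousOn_const.mul (ContinuousOn.rpow_const continuousOn_id fun t ht => Or.inl ?_)
    have := ht.1
    exact (by linarith : (0 : ℝ) < t).ne'
  obtain ⟨C, hC⟩ := isCompact_Icc.exists_bound_of_continuousOn hcont
  refine ⟨max C 0, le_max_right _ _, fun y hy => ?_⟩
  have h := (convex_Icc (1 / 2 : ℝ) 2).norm_image_sub_le_of_norm_hasDerivWithin_le
    (f := fun t : ℝ => t ^ a) (f' := fun t : ℝ => a * t ^ (a - 1)) (x := 1) (y := ‖y‖)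
    (fun t ht => (Real.hasDerivAt_rpow_const (Or.inl (by linarith [ht.1]))).hasDerivWithinAt) hC
    (by norm_num) ⟨hy.1.le, hy.2.le⟩
  simp only [Real.one_rpow, Real.norm_eq_abs] at h
  refine h.trans (mul_le_mul (le_max_left _ _) ?_ (abs_nonneg _) (le_max_right _ _))
  rw [← hη]
  exact abs_norm_sub_norm_le y η

lemma volume_shell_le {d : ℕ} (hd : 2 ≤ d) (η : Ed d) {ε : ℝ} (hε : 0 < ε) (hε2 : ε ≤ 1 / 2) :
    volume.real (closedBall η (ε * (1 + 2 * ε)) \ ball η (ε * (1 - ε))) ≤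
      volume.real (ball (0 : Ed d) 1) * (3 * d * 2 ^ (d - 1)) * ε ^ (d + 1) := by
  have : Nonempty (Fin d) := ⟨⟨0, by omega⟩⟩
  have hle : ε * (1 - ε) ≤ ε * (1 + 2 * ε) := by gcongr; linarith
  rw [measureReal_sdiff (ball_subset_closedBall.trans (closedBall_subset_closedBall hle))
    measurableSet_ball isBounded_closedBall.measure_lt_top.ne, measureReal_def, measureReal_def,
    Measure.addHaar_closedBall _ _ (by positivity),
    Measure.addHaar_ball _ _ (mul_nonneg hε.le (by linarith)), ENNReal.toReal_mul,
    ENNReal.toReal_mul, ← measureReal_def, finrank_euclideanSpace, Fintype.card_fin,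
    ENNReal.toReal_ofReal (by positivity),
    ENNReal.toReal_ofReal (pow_nonneg (mul_nonneg hε.le (by linarith)) _)]
  have h := (le_abs_self _).trans (abs_pow_sub_pow_le (1 + 2 * ε) (1 - ε) d)
  have hmax : max |1 + 2 * ε| |1 - ε| ≤ 2 := by
    refine max_le ?_ ?_ <;> rw [abs_of_nonneg (by linarith)] <;> linarith
  have h2 : (1 + 2 * ε) ^ d - (1 - ε) ^ d ≤ 3 * d * 2 ^ (d - 1) * ε := by
    refine h.trans ?_
    have : |1 + 2 * ε - (1 - ε)| = 3 * ε := by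
      rw [abs_of_nonneg (by linarith)]
      ring
    rw [this]
    calc 3 * ε * d * max |1 + 2 * ε| |1 - ε| ^ (d - 1) ≤ 3 * ε * d * 2 ^ (d - 1) := by gcongr
      _ = _ := by ring
  calc (ε * (1 + 2 * ε)) ^ d * volume.real (ball (0 : Ed d) 1) -
        (ε * (1 - ε)) ^ d * volume.real (ball (0 : Ed d) 1)
      = volume.real (ball (0 : Ed d) 1) * ε ^ d * ((1 + 2 * ε) ^ d - (1 - ε) ^ d) := by
        rw [mul_pow, mul_pow]
        ring
    _ ≤ volume.real (ball (0 : Ed d) 1) * ε ^ d * (3 * d * 2 ^ (d - 1) * ε) := by gcongr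
    _ = _ := by ring

lemma inversion_image_lt_norm_sub_inter_annulus {d : ℕ} {η : Ed d} (hη : ‖η‖ = 1) (ε : ℝ) :
    inversion d '' ({y | ε < ‖y - η‖} ∩ annulus d) = {y | ε * ‖y‖ < ‖y - η‖} ∩ annulus d := by
  have hpos : ∀ y ∈ annulus d, 0 < ‖y‖ := fun y hy => by linarith [hy.1]
  ext y
  constructor
  · rintro ⟨z, ⟨hz1, hz2⟩, rfl⟩
    have hz := hpos z hz2
    refine ⟨?_, inversion_mem_annulus hz2⟩
    change ε * ‖inversion d z‖ < ‖inversion d z - η‖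
    rw [norm_inversion_sub hη (norm_pos_iff.1 hz), norm_inversion, ← div_eq_mul_inv]
    exact div_lt_div_of_pos_right hz1 hz
  · rintro ⟨h1, h2⟩
    refine ⟨inversion d y, ⟨?_, inversion_mem_annulus h2⟩, inversion_inversion_self y⟩
    have hy := hpos y h2
    change ε < ‖inversion d y - η‖
    rw [norm_inversion_sub hη (norm_pos_iff.1 hy), lt_div_iff₀ hy]
    exact h1

/-- The principal value at `η` of the integral of `‖y‖ ^ (α - d) - 1` vanishes. -/
lemma tendsto_integral_lt_norm_sub_radial {d : ℕ} (hd : 2 ≤ d) {α : ℝ} (hα : 0 < α) (hα2 : α < 2)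
    {η : Ed d} (hη : ‖η‖ = 1) :
    Tendsto (fun ε => ∫ y in {y | ε < ‖y - η‖} ∩ annulus d,
      (‖y‖ ^ (α - d) - 1) * fracKernel d α η y) (nhdsWithin 0 (Ioi 0)) (nhds 0) := by
  obtain ⟨C, hC0, hC⟩ := exists_abs_norm_rpow_sub_one_le (α - d) hη
  set g : Ed d → ℝ := fun y => (‖y‖ ^ (α - d) - 1) * fracKernel d α η y with hg
  have hgm : Measurable g :=
    ((measurable_norm.pow_const _).sub_const _).mul (measurable_fracKernel d α η)
  have hWm : MeasurableSet (annulus d) := (isOpen_annulus d).measurableSet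
  set B : ℝ := C * 2 * 2 ^ ((d : ℝ) + α) *
    (volume.real (ball (0 : Ed d) 1) * (3 * d * 2 ^ (d - 1)))
  have hlim : Tendsto (fun ε : ℝ => B * ε ^ (2 - α)) (nhdsWithin 0 (Ioi 0)) (nhds 0) := by
    have h := (Real.continuousAt_rpow_const (0 : ℝ) (2 - α) (Or.inr (by linarith))).tendsto
    rw [Real.zero_rpow (by linarith)] at h
    simpa using (h.mono_left nhdsWithin_le_nhds).const_mul B
  refine squeeze_zero_norm' ?_ hlim
  filter_upwards [Ioo_mem_nhdsGT (show (0 : ℝ) < 1 / 2 by norm_num)] with ε hε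
  have hε0 : 0 < ε := hε.1
  have hε2 : ε ≤ 1 / 2 := hε.2.le
  set D := {y : Ed d | ε < ‖y - η‖} ∩ annulus d
  set D' := {y : Ed d | ε * ‖y‖ < ‖y - η‖} ∩ annulus d
  have hDm : MeasurableSet D := (measurableSet_lt (by fun_prop) (by fun_prop)).inter hWm
  have hDm' : MeasurableSet D' := (measurableSet_lt (by fun_prop) (by fun_prop)).inter hWm
  have hW3 : ∀ y ∈ annulus d, ‖y - η‖ ≤ 3 := fun y hy => by
    have := norm_sub_le y η
    linarith [hy.2]
  have hKle : ∀ y, ε / 2 ≤ ‖y - η‖ → fracKernel d α η y ≤ 2 ^ ((d : ℝ) + α) * ε ^ (-(d : ℝ) - α) := by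
    intro y hy
    refine (Real.rpow_le_rpow_of_nonpos (by positivity) hy
      (by linarith [(Nat.cast_nonneg d : (0 : ℝ) ≤ d)])).trans_eq ?_
    rw [Real.div_rpow hε0.le two_pos.le, div_eq_mul_inv, ← Real.rpow_neg two_pos.le, mul_comm]
    ring_nf
  have hsmall : ∀ y ∈ D', ε / 2 ≤ ‖y - η‖ := fun y hy => by
    have h1 : ε * ‖y‖ < ‖y - η‖ := hy.1
    have h2 := hy.2.1
    nlinarith
  have hgi : ∀ A : Set (Ed d), MeasurableSet A → A ⊆ annulus d → (∀ y ∈ A, ε / 2 ≤ ‖y - η‖) →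
      IntegrableOn g A := by
    intro A hA hAW hAε
    have hfin : volume A ≠ ∞ := by
      refine measure_ne_top_of_subset (show A ⊆ ball (0 : Ed d) 2 from fun y hy => ?_)
        (isBounded_ball.measure_lt_top (μ := volume)).ne
      simpa using (hAW hy).2
    refine IntegrableOn.of_bound hfin.lt_top hgm.aestronglyMeasurable
      (C * 3 * (2 ^ ((d : ℝ) + α) * ε ^ (-(d : ℝ) - α))) ?_
    filter_upwards [self_mem_ae_restrict hA] with y hy
    rw [norm_mul, Real.norm_eq_abs, Real.norm_of_nonneg (fracKernel_nonneg d α η y)]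
    refine mul_le_mul ((hC y (hAW hy)).trans ?_) (hKle y (hAε y hy)) (fracKernel_nonneg d α η y)
      (by positivity)
    gcongr
    exact hW3 y (hAW hy)
  have hi := hgi D hDm inter_subset_right fun y hy => by
    have : ε < ‖y - η‖ := hy.1
    linarith
  have hi' := hgi D' hDm' inter_subset_right hsmall
  have hodd : ∫ y in D', g y = -∫ y in D, g y := by
    simp only [D', D]
    rw [← inversion_image_lt_norm_sub_inter_annulus hη]
    exact setIntegral_image_inversion hη hDm fun h => by
      have := h.2.1
      simp at this
      linarith
  have hpiece : ∀ A : Set (Ed d), A ⊆ annulus d →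
      (∀ y ∈ A, ε * (1 - ε) ≤ ‖y - η‖ ∧ ‖y - η‖ ≤ ε * (1 + 2 * ε)) →
      |∫ y in A, g y| ≤ B * ε ^ (2 - α) := by
    intro A hAW hA
    have hsub : A ⊆ closedBall η (ε * (1 + 2 * ε)) \ ball η (ε * (1 - ε)) := fun y hy => by
      simpa [dist_eq_norm] using (hA y hy).symm
    have hfin : volume (closedBall η (ε * (1 + 2 * ε)) \ ball η (ε * (1 - ε))) ≠ ∞ :=
      measure_ne_top_of_subset sdiff_subset measure_closedBall_lt_top.ne
    have hb := norm_setIntegral_le_of_norm_le_const (μ := volume) (s := A) (f := g)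
      (C := C * (2 * ε) * (2 ^ ((d : ℝ) + α) * ε ^ (-(d : ℝ) - α)))
      (measure_ne_top_of_subset hsub hfin).lt_top fun y hy => by
        rw [norm_mul, Real.norm_eq_abs, Real.norm_of_nonneg (fracKernel_nonneg d α η y)]
        obtain ⟨h1, h2⟩ := hA y hy
        refine mul_le_mul ((hC y (hAW hy)).trans ?_) (hKle y (by nlinarith))
          (fracKernel_nonneg d α η y) (by positivity)
        gcongr
        nlinarith
    refine hb.trans ?_
    have hv := (measureReal_mono hsub hfin).trans (volume_shell_le hd η hε0 hε2)
    refine (mul_le_mul_of_nonneg_left hv (by positivity)).trans_eq ?_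
    have e : ε ^ (2 - α) = ε * ε ^ (-(d : ℝ) - α) * ε ^ (d + 1) := by
      rw [← Real.rpow_natCast, mul_assoc, ← Real.rpow_add hε0, ← Real.rpow_one_add' hε0.le]
      · congr 1
        push_cast
        ring
      · push_cast
        linarith
    rw [e]
    ring
  have hbounds : ∀ y : Ed d, 1 - ‖y - η‖ ≤ ‖y‖ ∧ ‖y‖ ≤ 1 + ‖y - η‖ := fun y => by
    have := abs_le.1 (abs_norm_sub_norm_le y η)
    rw [hη] at this
    exact ⟨by linarith [this.1], by linarith [this.2]⟩
  have p1 := hpiece (D \ D') (sdiff_subset.trans inter_subset_right) fun y hy => by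
    have h1 : ε < ‖y - η‖ := hy.1.1
    have h2 : ‖y - η‖ ≤ ε * ‖y‖ := not_lt.1 fun h => hy.2 ⟨h, hy.1.2⟩
    have h3 := (hbounds y).2
    have h4 := hy.1.2.2
    refine ⟨by nlinarith, ?_⟩
    have h5 : ‖y - η‖ ≤ 2 * ε := by nlinarith
    nlinarith
  have p2 := hpiece (D' \ D) (sdiff_subset.trans inter_subset_right) fun y hy => by
    have h1 : ε * ‖y‖ < ‖y - η‖ := hy.1.1
    have h2 : ‖y - η‖ ≤ ε := not_lt.1 fun h => hy.2 ⟨h, hy.1.2⟩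
    have h3 := (hbounds y).1
    exact ⟨by nlinarith, by nlinarith⟩
  have s1 := integral_inter_add_sdiff hDm' hi
  have s2 := integral_inter_add_sdiff hDm hi'
  rw [inter_comm] at s2
  rw [abs_le] at p1 p2
  rw [Real.norm_eq_abs, abs_le]
  constructor <;> linarith [p1.1, p1.2, p2.1, p2.2]

lemma hasFDerivAt_norm_rpow_of_unit {d : ℕ} (a : ℝ) {η : Ed d} (hη : ‖η‖ = 1) :
    HasFDerivAt (fun y : Ed d => ‖y‖ ^ a) (a • innerSL ℝ η) η := by
  have h := (hasStrictFDerivAt_norm_sq η).hasFDerivAt.rpow_const (p := a / 2)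
    (Or.inl (by rw [hη]; norm_num))
  convert! h using 1
  · ext1 y
    rw [← Real.rpow_natCast, ← Real.rpow_mul (norm_nonneg y)]
    congr 1
    push_cast
    ring
  · ext z
    simp [hη]
    ring

/-- Splitting off the two components of the linear part of `f` at the unit vector `η`: the radial
one is replaced by the inversion-odd function `‖y‖ ^ (α - d) - 1`, the tangential one is odd under
the reflection through the line spanned by `η`. -/
lemma exists_jet_decomposition {d : ℕ} (hd : 2 ≤ d) {α : ℝ} (hα2 : α < 2) {η : Ed d}
    (hη : ‖η‖ = 1) {f : Ed d → ℝ} (hf : ContDiffAt ℝ 2 f η) :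
    ∃ (c : ℝ) (w : Ed d), ⟪w, η⟫ = 0 ∧ ∃ C δ, 0 < δ ∧ ∀ y, ‖y - η‖ < δ →
      |f y - f η - (c * (annulus d).indicator (fun y => ‖y‖ ^ (α - d) - 1) y +
        (annulus d).indicator (fun y => ⟪w, y⟫) y)| ≤ C * ‖y - η‖ ^ 2 := by
  have hd' : (2 : ℝ) ≤ d := by exact_mod_cast hd
  have hη0 : η ≠ 0 := by
    rintro rfl
    simp at hη
  set v := (InnerProductSpace.toDual ℝ (Ed d)).symm (fderiv ℝ f η)
  have hv : ∀ z, fderiv ℝ f η z = ⟪v, z⟫ := fun z => by simp [v]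
  set c := ⟪v, η⟫ / (α - d) with hc
  set w := v - ⟪v, η⟫ • η with hw
  have hwη : ⟪w, η⟫ = 0 := by
    rw [hw, inner_sub_left, real_inner_smul_left, real_inner_self_eq_norm_sq, hη]
    ring
  refine ⟨c, w, hwη, ?_⟩
  set H : Ed d → ℝ := fun y => f y - f η - (c * (‖y‖ ^ (α - d) - 1) + ⟪w, y⟫) with hH
  have hH2 : ContDiffAt ℝ 2 H η := by
    refine (hf.sub contDiffAt_const).sub ((contDiffAt_const.mul (ContDiffAt.sub ?_
      contDiffAt_const)).add (contDiffAt_const.inner ℝ contDiffAt_id))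
    exact (contDiffAt_norm ℝ hη0).rpow_const_of_ne (norm_ne_zero_iff.2 hη0)
  have hHd : HasFDerivAt H (fderiv ℝ f η - (c • ((α - d) • innerSL ℝ η) + innerSL ℝ w)) η :=
    ((hf.differentiableAt (by simp)).hasFDerivAt.sub_const _).sub
      ((((hasFDerivAt_norm_rpow_of_unit (α - d) hη).sub_const 1).const_mul c).add
        (innerSL ℝ w).hasFDerivAt)
  have hH1 : fderiv ℝ H η = 0 := by
    rw [hHd.fderiv]
    ext z
    have : c * (α - d) = ⟪v, η⟫ := div_mul_cancel₀ _ (by linarith)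
    simp only [sub_apply, add_apply, hv,
      smul_apply, innerSL_apply_apply, smul_eq_mul,
      zero_apply]
    rw [← mul_assoc, this, hw, inner_sub_left, real_inner_smul_left]
    ring
  have hH0 : H η = 0 := by simp [hH, hη, hwη]
  obtain ⟨C, δ, hδ, hb⟩ := exists_abs_le_sq_of_contDiffAt hH2 hH0 hH1
  refine ⟨C, min δ (1 / 2), by positivity, fun y hy => ?_⟩
  have hyW : y ∈ annulus d := by
    have h1 : ‖y - η‖ < 1 / 2 := hy.trans_le (min_le_right _ _)
    have h2 := abs_le.1 (abs_norm_sub_norm_le y η)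
    rw [hη] at h2
    exact ⟨by linarith [h2.1], by linarith [h2.2]⟩
  rw [indicator_of_mem hyW, indicator_of_mem hyW]
  exact hb y (hy.trans_le (min_le_left _ _))

lemma coneCompl_inter_annulus_integral_radial {d : ℕ} {α : ℝ} {η : Ed d} (hη : ‖η‖ = 1) (ε : ℝ) :
    ∫ y in coneCompl η ε ∩ annulus d, (‖y‖ ^ (α - d) - 1) * fracKernel d α η y = 0 := by
  have h := setIntegral_image_inversion (α := α) hη
    ((measurableSet_coneCompl η ε).inter (isOpen_annulus d).measurableSet) fun h => by
      have := h.2.1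
      simp at this
      linarith
  rw [inversion_image_coneCompl_inter_annulus] at h
  linarith

/-- Where the fractional Laplacian exists, the same value is obtained when the singularity is
removed with shrinking cones instead of shrinking balls. -/
theorem tendsto_integral_coneCompl_of_fracLapAt {d : ℕ} (hd : 2 ≤ d) {α s C L : ℝ} (hα : 0 < α)
    (hα2 : α < 2) (hs0 : 0 ≤ s) (hs : s < α) {η : Ed d} (hη : ‖η‖ = 1) {f : Ed d → ℝ}
    (hfm : Measurable f) (hfb : ∀ y, |f y - f η| ≤ C * (1 + ‖y‖) ^ s)
    (hf : ContDiffAt ℝ 2 f η) (hL : fracLapAt d α f η L) :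
    Tendsto (fun ε => ∫ y in coneCompl η ε, (f y - f η) * fracKernel d α η y)
      (nhdsWithin 0 (Ioi 0)) (nhds ((fracConst d α)⁻¹ * L)) := by
  obtain ⟨c, w, hw, C₁, δ, hδ, hjet⟩ := exists_jet_decomposition hd hα2 hη hf
  obtain ⟨C₂, hC₂0, hC₂⟩ := exists_abs_norm_rpow_sub_one_le (α - d) hη
  have hWm : MeasurableSet (annulus d) := (isOpen_annulus d).measurableSet
  set K := fracKernel d α η
  set P := (annulus d).indicator fun y : Ed d => ‖y‖ ^ (α - d) - 1
  set Q := (annulus d).indicator fun y : Ed d => ⟪w, y⟫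
  have hPm : Measurable P := ((measurable_norm.pow_const _).sub_const _).indicator hWm
  have hQm : Measurable Q := (show Measurable fun y : Ed d => ⟪w, y⟫ by fun_prop).indicator hWm
  have hone : ∀ y : Ed d, 1 ≤ (1 + ‖y‖) ^ s := fun y =>
    Real.one_le_rpow (by linarith [norm_nonneg y]) hs0
  have hPb : ∀ y, |P y| ≤ C₂ * 3 * (1 + ‖y‖) ^ s := fun y => by
    refine le_trans ?_ (le_mul_of_one_le_right (by positivity) (hone y))
    by_cases hy : y ∈ annulus d
    · simp only [P, indicator_of_mem hy]
      refine (hC₂ y hy).trans ?_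
      gcongr
      have := norm_sub_le y η
      linarith [hy.2]
    · simp only [P, indicator_of_notMem hy, abs_zero]
      positivity
  have hQb : ∀ y, |Q y| ≤ ‖w‖ * 2 * (1 + ‖y‖) ^ s := fun y => by
    refine le_trans ?_ (le_mul_of_one_le_right (by positivity) (hone y))
    by_cases hy : y ∈ annulus d
    · simp only [Q, indicator_of_mem hy]
      refine (abs_real_inner_le_norm w y).trans ?_
      gcongr
      exact hy.2.le
    · simp only [Q, indicator_of_notMem hy, abs_zero]
      positivity
  set H : Ed d → ℝ := fun y => f y - f η - (c * P y + Q y) with hH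
  have hHm : Measurable H := (hfm.sub_const _).sub ((hPm.const_mul c).add hQm)
  have hHb : ∀ y, |H y| ≤ (C + (|c| * (C₂ * 3) + ‖w‖ * 2)) * (1 + ‖y‖) ^ s := fun y => by
    have h1 : |H y| ≤ |f y - f η| + (|c| * |P y| + |Q y|) := by
      refine (abs_sub _ _).trans (add_le_add le_rfl ((abs_add_le _ _).trans ?_))
      rw [abs_mul]
    have h2 := mul_le_mul_of_nonneg_left (hPb y) (abs_nonneg c)
    have h3 := hfb y
    have h4 := hQb y
    linarith
  have hHi : Integrable fun y => H y * K y :=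
    integrable_mul_fracKernel_of_sq hd hα hα2 hs hη hHm hHb hδ hjet
  have hsplit : ∀ (A : Set (Ed d)) (C' : ℝ), MeasurableSet A →
      (∀ y ∈ A, K y ≤ C' * (1 + ‖y‖) ^ (-((d : ℝ) + α))) →
      ((ℝ ∙ η).reflection ⁻¹' A = A) →
      ∫ y in A, (f y - f η) * K y = (∫ y in A, H y * K y) +
        c * ∫ y in A ∩ annulus d, (‖y‖ ^ (α - d) - 1) * K y := by
    intro A C' hA hK hrefl
    have hPi : IntegrableOn (fun y => P y * K y) A := integrableOn_mul_fracKernel hs hPm hA hPb hK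
    have hQi : IntegrableOn (fun y => Q y * K y) A := integrableOn_mul_fracKernel hs hQm hA hQb hK
    have hP : ∫ y in A, P y * K y = ∫ y in A ∩ annulus d, (‖y‖ ^ (α - d) - 1) * K y := by
      rw [← setIntegral_indicator hWm]
      simp only [P, indicator_mul_left]
    have hQ : ∫ y in A, Q y * K y = 0 := by
      rw [← setIntegral_inner_mul_fracKernel_eq_zero (α := α) hw (A := A ∩ annulus d)
        (by rw [preimage_inter, hrefl, reflection_preimage_annulus]), ← setIntegral_indicator hWm]
      simp only [Q, indicator_mul_left, K]
    have e : ∀ y, (f y - f η) * K y = H y * K y + (c * (P y * K y) + Q y * K y) := fun y => by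
      simp only [hH]
      ring
    simp_rw [e]
    have hPQ : IntegrableOn (fun y => c * (P y * K y) + Q y * K y) A := (hPi.const_mul c).add hQi
    rw [integral_add hHi.integrableOn hPQ, integral_add (hPi.const_mul c) hQi, integral_const_mul,
      hP, hQ, add_zero]
  have hball : Tendsto (fun ε => ∫ y in {y : Ed d | ε < ‖y - η‖}, (f y - f η) * K y)
      (nhdsWithin 0 (Ioi 0)) (nhds (∫ y, H y * K y)) := by
    have h := (tendsto_setIntegral_of_ae_eventually_mem hHi
      (fun ε => measurableSet_lt measurable_const (by fun_prop))
      (ae_eventually_lt_norm_sub hd η)).add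
      ((tendsto_integral_lt_norm_sub_radial hd hα hα2 hη).const_mul c)
    rw [mul_zero, add_zero] at h
    refine h.congr' ?_
    filter_upwards [self_mem_nhdsWithin] with ε hε
    exact (hsplit {y | ε < ‖y - η‖} _ (measurableSet_lt measurable_const (by fun_prop))
      (fun y hy => fracKernel_le_of_le_norm_sub hα hε hη (le_of_lt hy))
      (reflection_preimage_lt_norm_sub ε)).symm
  have hcone : Tendsto (fun ε => ∫ y in coneCompl η ε, (f y - f η) * K y)
      (nhdsWithin 0 (Ioi 0)) (nhds (∫ y, H y * K y)) := by
    refine (tendsto_setIntegral_of_ae_eventually_mem hHi (measurableSet_coneCompl η)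
      (ae_eventually_mem_coneCompl hd hη)).congr' ?_
    filter_upwards [eventually_cos_lt_one] with ε hε
    rw [hsplit _ _ (measurableSet_coneCompl η ε)
      (fun y hy => fracKernel_le_of_mem_coneCompl hα hη hε hy) (reflection_preimage_coneCompl ε),
      coneCompl_inter_annulus_integral_radial hη, mul_zero, add_zero]
  have hval : (fracConst d α)⁻¹ * L = ∫ y, H y * K y := by
    have hA := (fracConst_pos (d := d) hα hα2).ne'
    have hu : L = fracConst d α * ∫ y, H y * K y := tendsto_nhds_unique hL (hball.const_mul _)
    rw [hu, inv_mul_cancel_left₀ hA]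
  rw [hval]
  exact hcone

/-- If `φ ≤ C ψ` on the sphere and `p < q`, then for a suitable `a > 0` the difference of the
homogeneous extensions `homogExt p φ - a * homogExt q ψ` has a positive maximum, attained at a
unit vector. -/
lemma exists_isMaxOn_homogExt_sub {d : ℕ} {p q C : ℝ} (hp : 0 < p) (hpq : p < q) (hC : 0 < C)
    {φ ψ : Ed d → ℝ} (hφ : ContinuousOn φ (unitSphere d)) (hψ : ContinuousOn ψ (unitSphere d))
    (hψ0 : ∀ θ ∈ unitSphere d, 0 ≤ ψ θ) (hφψ : ∀ θ ∈ unitSphere d, φ θ ≤ C * ψ θ)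
    (hpos : ∃ θ ∈ unitSphere d, 0 < φ θ) :
    ∃ a > 0, ∃ η ∈ unitSphere d, 0 < homogExt p φ η - a * homogExt q ψ η ∧
      ∀ y, homogExt p φ y - a * homogExt q ψ y ≤ homogExt p φ η - a * homogExt q ψ η := by
  have hq : 0 < q := hp.trans hpq
  set P := homogExt p φ
  set Q := homogExt q ψ
  have hPc : Continuous P := continuous_homogExt hp hφ
  have hQc : Continuous Q := continuous_homogExt hq hψ
  set R := C ^ (q - p)⁻¹ with hRdef
  have hR : 0 < R := by positivity
  have hRC : R ^ (q - p) = C := by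
    rw [hRdef, ← Real.rpow_mul hC.le, inv_mul_cancel₀ (by linarith), Real.rpow_one]
  have hout : ∀ y, R < ‖y‖ → P y - Q y ≤ 0 := by
    intro y hy
    have hy0 : 0 < ‖y‖ := hR.trans hy
    have hS := norm_inv_smul_mem_unitSphere (norm_pos_iff.1 hy0)
    have h1 : C ≤ ‖y‖ ^ (q - p) := by
      rw [← hRC]
      exact Real.rpow_le_rpow hR.le hy.le (by linarith)
    have h2 : ‖y‖ ^ q = ‖y‖ ^ p * ‖y‖ ^ (q - p) := by
      rw [← Real.rpow_add hy0]
      ring_nf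
    have h3 : φ (‖y‖⁻¹ • y) ≤ ‖y‖ ^ (q - p) * ψ (‖y‖⁻¹ • y) :=
      (hφψ _ hS).trans (mul_le_mul_of_nonneg_right h1 (hψ0 _ hS))
    simp only [P, Q, homogExt]
    rw [h2, mul_assoc, ← mul_sub]
    exact mul_nonpos_of_nonneg_of_nonpos (by positivity) (by linarith)
  obtain ⟨y₀, -, hmax⟩ := (isCompact_closedBall (0 : Ed d) R).exists_isMaxOn
    (nonempty_closedBall.2 hR.le) (hPc.sub hQc).continuousOn
  have hposPt : ∃ z, 0 < P z - Q z := by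
    obtain ⟨θ, hθ, hφθ⟩ := hpos
    have hθ1 : ‖θ‖ = 1 := by simpa [unitSphere] using hθ
    have hlim : Tendsto (fun r : ℝ => φ θ - r ^ (q - p) * ψ θ) (nhdsWithin 0 (Ioi 0))
        (nhds (φ θ)) := by
      have h := (Real.continuousAt_rpow_const (0 : ℝ) (q - p) (Or.inr (by linarith))).tendsto
      rw [Real.zero_rpow (by linarith)] at h
      simpa using ((h.mono_left nhdsWithin_le_nhds).mul_const (ψ θ)).const_sub (φ θ)
    obtain ⟨r, hr, hr0⟩ := ((hlim.eventually (lt_mem_nhds hφθ)).and self_mem_nhdsWithin).exists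
    have hr0 : 0 < r := hr0
    refine ⟨r • θ, ?_⟩
    have h2 : r ^ q = r ^ p * r ^ (q - p) := by
      rw [← Real.rpow_add hr0]
      ring_nf
    simp only [P, Q]
    rw [homogExt_smul hr0, homogExt_smul hr0, homogExt_of_unit hθ1, homogExt_of_unit hθ1, h2,
      mul_assoc, ← mul_sub]
    positivity
  obtain ⟨z, hz⟩ := hposPt
  have hzR : z ∈ closedBall (0 : Ed d) R := by
    rw [mem_closedBall_zero_iff]
    by_contra! h
    linarith [hout z h]
  have hy₀ : 0 < P y₀ - Q y₀ := hz.trans_le (hmax hzR)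
  have hall : ∀ y, P y - Q y ≤ P y₀ - Q y₀ := fun y => by
    by_cases hy : ‖y‖ ≤ R
    · exact hmax (mem_closedBall_zero_iff.2 hy)
    · linarith [hout y (not_le.1 hy)]
  have hne : y₀ ≠ 0 := by
    rintro rfl
    simp [P, Q, homogExt_zero hp, homogExt_zero hq] at hy₀
  have hr : 0 < ‖y₀‖ := norm_pos_iff.2 hne
  set r := ‖y₀‖
  have hscale : ∀ y, P y - r ^ (q - p) * Q y = (r ^ p)⁻¹ * (P (r • y) - Q (r • y)) := by
    intro y
    have h2 : r ^ q = r ^ p * r ^ (q - p) := by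
      rw [← Real.rpow_add hr]
      ring_nf
    simp only [P, Q]
    rw [homogExt_smul hr, homogExt_smul hr, h2, mul_assoc, ← mul_sub,
      inv_mul_cancel_left₀ (by positivity)]
  have hback : r • (r⁻¹ • y₀) = y₀ := by rw [smul_smul, mul_inv_cancel₀ hr.ne', one_smul]
  refine ⟨r ^ (q - p), by positivity, r⁻¹ • y₀, norm_inv_smul_mem_unitSphere hne, ?_, fun y => ?_⟩
  · rw [hscale, hback]
    positivity
  · rw [hscale, hscale (r⁻¹ • y₀), hback]
    exact mul_le_mul_of_nonneg_left (hall _) (by positivity)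

/-- Strict maximum principle for the cone-regularized integrals. -/
lemma lt_zero_of_tendsto_integral_coneCompl {d : ℕ} {α s C l : ℝ} (hα : 0 < α) (hs : s < α)
    {η : Ed d} (hη : ‖η‖ = 1) {F : Ed d → ℝ} (hF : Continuous F) (hF0 : ∀ y, F y ≤ 0)
    (hF00 : F 0 < 0) (hFb : ∀ y, |F y| ≤ C * (1 + ‖y‖) ^ s)
    (hl : Tendsto (fun ε => ∫ y in coneCompl η ε, F y * fracKernel d α η y)
      (nhdsWithin 0 (Ioi 0)) (nhds l)) : l < 0 := by
  have hi : ∀ ε, Real.cos ε < 1 →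
      IntegrableOn (fun y => F y * fracKernel d α η y) (coneCompl η ε) := fun ε hε =>
    integrableOn_mul_fracKernel hs hF.measurable (measurableSet_coneCompl η ε) hFb
      fun y hy => fracKernel_le_of_mem_coneCompl hα hη hε hy
  have hin : ∀ ε, Real.cos ε < 1 →
      IntegrableOn (fun y => -(F y * fracKernel d α η y)) (coneCompl η ε) := fun ε hε =>
    (hi ε hε).neg
  have hhalf := hin (π / 2) (by rw [Real.cos_pi_div_two]; exact zero_lt_one)
  have hneg : 0 < ∫ y in coneCompl η (π / 2), -(F y * fracKernel d α η y) := by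
    rw [setIntegral_pos_iff_support_of_nonneg_ae
      (ae_of_all _ fun y => by
        simpa using mul_nonpos_of_nonpos_of_nonneg (hF0 y) (fracKernel_nonneg d α η y)) hhalf]
    have hopen : IsOpen ({y | ⟪y, η⟫ < 0} ∩ {y | F y < 0}) :=
      (isOpen_lt (by fun_prop) continuous_const).inter (isOpen_lt hF continuous_const)
    have hne : ({y | ⟪y, η⟫ < 0} ∩ {y | F y < 0}).Nonempty := by
      have hlim : Tendsto (fun t : ℝ => F (-t • η)) (nhdsWithin 0 (Ioi 0)) (nhds (F 0)) := by
        have : Continuous fun t : ℝ => F (-t • η) := by fun_prop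
        have := this.tendsto 0
        simp only [neg_zero, zero_smul] at this
        exact this.mono_left nhdsWithin_le_nhds
      obtain ⟨t, ht, ht0⟩ := ((hlim.eventually (gt_mem_nhds hF00)).and self_mem_nhdsWithin).exists
      have ht0 : 0 < t := ht0
      refine ⟨-t • η, ?_, ht⟩
      change ⟪-t • η, η⟫ < 0
      rw [real_inner_smul_left, real_inner_self_eq_norm_sq, hη]
      linarith
    refine (hopen.measure_pos volume hne).trans_le (measure_mono ?_)
    rintro y ⟨h1, h2⟩
    have h1 : ⟪y, η⟫ < 0 := h1
    have h2 : F y < 0 := h2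
    refine ⟨?_, ?_⟩
    · have hyη : y ≠ η := by
        rintro rfl
        linarith [real_inner_self_nonneg (x := y)]
      have : 0 < ‖y - η‖ := norm_pos_iff.2 (sub_ne_zero.2 hyη)
      have hK : 0 < fracKernel d α η y := Real.rpow_pos_of_pos this _
      exact (neg_pos.2 (mul_neg_of_neg_of_pos h2 hK)).ne'
    · change ⟪y, η⟫ ≤ ‖y‖ * Real.cos (π / 2)
      rw [Real.cos_pi_div_two, mul_zero]
      exact h1.le
  rw [integral_neg] at hneg
  refine lt_of_le_of_lt (le_of_tendsto hl ?_) (neg_pos.1 hneg)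
  filter_upwards [eventually_cos_lt_one, Ioo_mem_nhdsGT (show (0 : ℝ) < π / 2 by positivity)]
    with ε hε1 hε
  have hmono := setIntegral_mono_set (hin ε hε1) (ae_of_all _ fun y => by
    simpa using mul_nonpos_of_nonpos_of_nonneg (hF0 y) (fracKernel_nonneg d α η y))
    (show coneCompl η (π / 2) ⊆ coneCompl η ε from fun y hy => ?_).eventuallyLE
  · simp only [integral_neg] at hmono
    linarith
  · have hy : ⟪y, η⟫ ≤ ‖y‖ * Real.cos (π / 2) := hy
    rw [Real.cos_pi_div_two, mul_zero] at hy
    exact hy.trans (mul_nonneg (norm_nonneg y)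
      (Real.cos_nonneg_of_mem_Icc ⟨by linarith [hε.1, Real.pi_pos], hε.2.le⟩))

/-- Comparison of the homogeneity degrees of a subharmonic and a superharmonic function. -/
theorem degree_le_of_sub_of_super {d : ℕ} {α p q C : ℝ} (hα : 0 < α) (hp : 0 < p) (hq : 0 < q)
    (hqα : q < α) (hC : 0 < C) {φ ψ : Ed d → ℝ} (hφ : ContinuousOn φ (unitSphere d))
    (hψ : ContinuousOn ψ (unitSphere d)) (hψ0 : ∀ θ ∈ unitSphere d, 0 ≤ ψ θ)
    (hφψ : ∀ θ ∈ unitSphere d, φ θ ≤ C * ψ θ) (hpos : ∃ θ ∈ unitSphere d, 0 < φ θ)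
    (hsub : ∀ η ∈ unitSphere d, 0 < φ η → ∃ l ≥ 0, Tendsto (fun ε => ∫ y in coneCompl η ε,
      (homogExt p φ y - homogExt p φ η) * fracKernel d α η y) (nhdsWithin 0 (Ioi 0)) (nhds l))
    (hsuper : ∀ η ∈ unitSphere d, 0 < φ η → ∃ l ≤ 0, Tendsto (fun ε => ∫ y in coneCompl η ε,
      (homogExt q ψ y - homogExt q ψ η) * fracKernel d α η y) (nhdsWithin 0 (Ioi 0)) (nhds l)) :
    q ≤ p := by
  by_contra! hpq
  obtain ⟨a, ha, η, hηS, hm, hmax⟩ := exists_isMaxOn_homogExt_sub hp hpq hC hφ hψ hψ0 hφψ hpos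
  have hη : ‖η‖ = 1 := by simpa [unitSphere] using hηS
  have hφη : 0 < φ η := by
    rw [homogExt_of_unit hη, homogExt_of_unit hη] at hm
    have := mul_nonneg ha.le (hψ0 η hηS)
    linarith
  obtain ⟨l₁, hl₁, h₁⟩ := hsub η hηS hφη
  obtain ⟨l₂, hl₂, h₂⟩ := hsuper η hηS hφη
  set P := homogExt p φ
  set Q := homogExt q ψ
  have hPc : Continuous P := continuous_homogExt hp hφ
  have hQc : Continuous Q := continuous_homogExt hq hψ
  obtain ⟨C₁, hC₁⟩ := exists_abs_homogExt_sub_le hp hφ (P η)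
  obtain ⟨C₂, hC₂⟩ := exists_abs_homogExt_sub_le hq hψ (Q η)
  have hC₁0 : 0 ≤ C₁ := by
    have := (abs_nonneg _).trans (hC₁ 0)
    simpa using this
  have hbound : ∀ y, |P y - P η - a * (Q y - Q η)| ≤ (C₁ + a * C₂) * (1 + ‖y‖) ^ q := fun y => by
    have h1 : (1 + ‖y‖) ^ p ≤ (1 + ‖y‖) ^ q :=
      Real.rpow_le_rpow_of_exponent_le (by linarith [norm_nonneg y]) hpq.le
    have h2 := mul_le_mul_of_nonneg_left h1 hC₁0
    have h3 := mul_le_mul_of_nonneg_left (hC₂ y) ha.le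
    have h4 := (abs_sub (P y - P η) (a * (Q y - Q η))).trans
      (add_le_add (hC₁ y) (abs_mul a _).le)
    rw [abs_of_pos ha] at h4
    linarith
  have hlim : Tendsto (fun ε => ∫ y in coneCompl η ε,
      (P y - P η - a * (Q y - Q η)) * fracKernel d α η y) (nhdsWithin 0 (Ioi 0))
      (nhds (l₁ - a * l₂)) := by
    refine (h₁.sub (h₂.const_mul a)).congr' ?_
    filter_upwards [eventually_cos_lt_one] with ε hε
    have hK := fun y hy => fracKernel_le_of_mem_coneCompl (d := d) hα hη hε (y := y) hy
    have i1 := integrableOn_mul_fracKernel (hpq.trans hqα) (hPc.measurable.sub_const (P η))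
      (measurableSet_coneCompl η ε) hC₁ hK
    have i2 := integrableOn_mul_fracKernel hqα (hQc.measurable.sub_const (Q η))
      (measurableSet_coneCompl η ε) hC₂ hK
    rw [← integral_const_mul, ← integral_sub i1 (i2.const_mul a)]
    congr 1
    ext y
    ring
  have hl := lt_zero_of_tendsto_integral_coneCompl hα hqα hη
    (F := fun y => P y - P η - a * (Q y - Q η)) (by fun_prop) (fun y => by linarith [hmax y])
    (by
      simp only [P, Q, homogExt_zero hp, homogExt_zero hq] at hm ⊢
      linarith) hbound hlim
  have := mul_nonpos_of_nonneg_of_nonpos ha.le hl₂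
  linarith

lemma continuous_lastCoord (d : ℕ) : Continuous (lastCoord d) := by
  unfold lastCoord
  split_ifs <;> fun_prop

lemma isOpen_cone (d : ℕ) (Θ : ℝ) : IsOpen (cone d Θ) :=
  isOpen_lt (by fun_prop) (continuous_lastCoord d)

lemma zero_notMem_cone (d : ℕ) (Θ : ℝ) : (0 : Ed d) ∉ cone d Θ := by
  simp [cone, lastCoord]

lemma eLast_mem_unitSphere {d : ℕ} (hd : 2 ≤ d) : eLast d ∈ unitSphere d := by
  simp [eLast, unitSphere, show 0 < d by omega]

lemma eLast_mem_cone {d : ℕ} (hd : 2 ≤ d) {Θ : ℝ} (hΘ : Θ ∈ Ioo (0 : ℝ) π) :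
    eLast d ∈ cone d Θ := by
  have h1 : ‖eLast d‖ = 1 := by simpa [unitSphere] using eLast_mem_unitSphere hd
  have h2 : Real.cos Θ < 1 := by
    simpa using Real.cos_lt_cos_of_nonneg_of_le_pi le_rfl hΘ.2.le hΘ.1
  change ‖eLast d‖ * Real.cos Θ < lastCoord d (eLast d)
  rw [h1, one_mul]
  simpa [lastCoord, eLast, show 0 < d by omega] using h2

lemma infDist_compl_cone_pos_iff {d : ℕ} {Θ : ℝ} {x : Ed d} :
    0 < infDist x (cone d Θ)ᶜ ↔ x ∈ cone d Θ := by
  rw [← (isOpen_cone d Θ).isClosed_compl.notMem_iff_infDist_pos ⟨0, zero_notMem_cone d Θ⟩,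
    notMem_compl_iff]

lemma mem_capB_of_mem_cone {d : ℕ} {Θ : ℝ} {x : Ed d} (hx : x ∈ unitSphere d)
    (hc : x ∈ cone d Θ) : x ∈ capB d Θ := by
  have h1 : ‖x‖ = 1 := by simpa [unitSphere] using hx
  have hc : ‖x‖ * Real.cos Θ < lastCoord d x := hc
  rw [h1, one_mul] at hc
  exact ⟨hx, hc⟩

section ComparableProfiles

variable {d : ℕ} {α Θ k : ℝ} {φ : Ed d → ℝ}

lemma pos_iff_mem_cone_of_comparable (hα : 0 < α) (hk : 1 ≤ k)
    (h : ∀ θ ∈ unitSphere d, k⁻¹ * infDist θ (cone d Θ)ᶜ ^ (α / 2) ≤ φ θ ∧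
      φ θ ≤ k * infDist θ (cone d Θ)ᶜ ^ (α / 2)) {θ : Ed d} (hθ : θ ∈ unitSphere d) :
    0 < φ θ ↔ θ ∈ cone d Θ := by
  rw [← infDist_compl_cone_pos_iff]
  constructor
  · intro hpos
    refine infDist_nonneg.lt_of_ne fun h0 => ?_
    have := (h θ hθ).2
    rw [← h0, Real.zero_rpow (by positivity), mul_zero] at this
    linarith
  · intro hpos
    have h1 : 0 < k⁻¹ * infDist θ (cone d Θ)ᶜ ^ (α / 2) := by positivity
    exact h1.trans_le (h θ hθ).1

lemma nonneg_of_comparable (hk : 1 ≤ k)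
    (h : ∀ θ ∈ unitSphere d, k⁻¹ * infDist θ (cone d Θ)ᶜ ^ (α / 2) ≤ φ θ ∧
      φ θ ≤ k * infDist θ (cone d Θ)ᶜ ^ (α / 2)) {θ : Ed d} (hθ : θ ∈ unitSphere d) :
    0 ≤ φ θ :=
  (mul_nonneg (by positivity) (Real.rpow_nonneg infDist_nonneg _)).trans (h θ hθ).1

lemma le_mul_of_comparable {k' : ℝ} {ψ : Ed d → ℝ} (hk : 1 ≤ k) (hk' : 1 ≤ k')
    (h : ∀ θ ∈ unitSphere d, k⁻¹ * infDist θ (cone d Θ)ᶜ ^ (α / 2) ≤ φ θ ∧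
      φ θ ≤ k * infDist θ (cone d Θ)ᶜ ^ (α / 2))
    (h' : ∀ θ ∈ unitSphere d, k'⁻¹ * infDist θ (cone d Θ)ᶜ ^ (α / 2) ≤ ψ θ ∧
      ψ θ ≤ k' * infDist θ (cone d Θ)ᶜ ^ (α / 2)) {θ : Ed d} (hθ : θ ∈ unitSphere d) :
    φ θ ≤ k * k' * ψ θ := by
  have h1 := (h θ hθ).2
  have h2 := (h' θ hθ).1
  rw [inv_mul_le_iff₀ (by linarith)] at h2
  rw [mul_assoc]
  exact h1.trans (mul_le_mul_of_nonneg_left h2 (by linarith))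

end ComparableProfiles

lemma homogExt_eq_self {d : ℕ} {s : ℝ} (hs : 0 < s) {M : Ed d → ℝ} (h0 : M 0 = 0)
    (hM : ∀ r : ℝ, 0 < r → ∀ x : Ed d, x ≠ 0 → M (r • x) = r ^ s * M x) : homogExt s M = M := by
  ext y
  rcases eq_or_ne y 0 with rfl | hy
  · rw [homogExt_zero hs, h0]
  · have hn : 0 < ‖y‖ := norm_pos_iff.2 hy
    rw [homogExt, hM _ (by positivity) y hy, Real.inv_rpow hn.le,
      mul_inv_cancel_left₀ (by positivity)]

/-- comparison of the homogeneity degree `β` of the Martin kernel with `λ`,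
via sub/superharmonic spherical profiles. -/
theorem beta_estimates (d : ℕ) (hd : 2 ≤ d) (α : ℝ) (hα : 0 < α) (hα2 : α < 2)
    (Θ : ℝ) (hΘ : Θ ∈ Set.Ioo (0 : ℝ) π) (β : ℝ) (hβ : β ∈ Set.Ioo (0 : ℝ) α)
    (κ κ' : ℝ) (hκ : 1 ≤ κ) (hκ' : 1 ≤ κ')
    (M : Ed d → ℝ) (hMc : Continuous M) (hMpos : ∀ x, 0 ≤ M x)
    (hMz : ∀ x, x ∉ cone d Θ → M x = 0)
    (hMC2 : ContDiffOn ℝ 2 M (cone d Θ))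
    (hMhom : ∀ r : ℝ, 0 < r → ∀ x : Ed d, x ≠ 0 → M (r • x) = r ^ β * M x)
    (hMharm : ∀ x ∈ cone d Θ, fracLapAt d α M x 0)
    (hMcomp : ∀ θ ∈ unitSphere d,
      κ⁻¹ * Metric.infDist θ (cone d Θ)ᶜ ^ (α / 2) ≤ M θ ∧
        M θ ≤ κ * Metric.infDist θ (cone d Θ)ᶜ ^ (α / 2))
    (φ : Ed d → ℝ) (hφc : ContinuousOn φ (unitSphere d))
    (hφC2 : ∀ η ∈ capB d Θ, ContDiffAt ℝ 2 (fun x : Ed d => φ (‖x‖⁻¹ • x)) η)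
    (hφcomp : ∀ θ ∈ unitSphere d,
      κ'⁻¹ * Metric.infDist θ (cone d Θ)ᶜ ^ (α / 2) ≤ φ θ ∧
        φ θ ≤ κ' * Metric.infDist θ (cone d Θ)ᶜ ^ (α / 2))
    (lam : ℝ) (hlam : lam ∈ Set.Ioo (0 : ℝ) α) :
    ((∀ η ∈ capB d Θ, ∃ L : ℝ, sphFracLapAt d α φ η L ∧
        IntegrableOn (RopIntegrand d α lam φ η) (unitSphere d) (sphMeasure d) ∧
        0 ≤ L + Rop d α lam φ η) → β ≤ lam) ∧
    ((∀ η ∈ capB d Θ, ∃ L : ℝ, sphFracLapAt d α φ η L ∧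
        IntegrableOn (RopIntegrand d α lam φ η) (unitSphere d) (sphMeasure d) ∧
        L + Rop d α lam φ η ≤ 0) → lam ≤ β) := by
  have hM0 : M 0 = 0 := hMz 0 (zero_notMem_cone d Θ)
  have hMext : homogExt β M = M := homogExt_eq_self hβ.1 hM0 hMhom
  have hlimM : ∀ η ∈ unitSphere d, η ∈ cone d Θ → Tendsto (fun ε => ∫ y in coneCompl η ε,
      (homogExt β M y - homogExt β M η) * fracKernel d α η y) (nhdsWithin 0 (Ioi 0)) (nhds 0) := by
    intro η hη hηc
    obtain ⟨C, hC⟩ := exists_abs_homogExt_sub_le hβ.1 hMc.continuousOn (M η)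
    rw [hMext] at hC ⊢
    have h := tendsto_integral_coneCompl_of_fracLapAt hd hα hα2 hβ.1.le hβ.2
      (by simpa [unitSphere] using hη) hMc.measurable hC
      (hMC2.contDiffAt ((isOpen_cone d Θ).mem_nhds hηc)) (hMharm η hηc)
    rwa [mul_zero] at h
  have he := eLast_mem_unitSphere hd
  have hec := eLast_mem_cone hd hΘ
  have hφpos : ∀ {θ : Ed d}, θ ∈ unitSphere d → (0 < φ θ ↔ θ ∈ cone d Θ) := fun hθ =>
    pos_iff_mem_cone_of_comparable hα hκ' hφcomp hθ
  have hMpos' : ∀ {θ : Ed d}, θ ∈ unitSphere d → (0 < M θ ↔ θ ∈ cone d Θ) := fun hθ =>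
    pos_iff_mem_cone_of_comparable hα hκ hMcomp hθ
  constructor
  · intro h
    refine degree_le_of_sub_of_super hα hlam.1 hβ.1 hβ.2 (C := κ' * κ) (by positivity) hφc
      hMc.continuousOn (fun θ _ => hMpos θ)
      (fun θ hθ => le_mul_of_comparable hκ' hκ hφcomp hMcomp hθ) ⟨_, he, (hφpos he).2 hec⟩
      (fun η hη hηp => ?_) (fun η hη hηp => ⟨0, le_rfl, hlimM η hη ((hφpos hη).1 hηp)⟩)
    obtain ⟨L, hL, hR, hLR⟩ := h η (mem_capB_of_mem_cone hη ((hφpos hη).1 hηp))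
    obtain ⟨c, hc, hlim⟩ := tendsto_integral_coneCompl_homogExt hd hα hα2 hlam.1 hlam.2 hφc
      (by simpa [unitSphere] using hη) hL hR
    exact ⟨_, mul_nonneg hc.le hLR, hlim⟩
  · intro h
    refine degree_le_of_sub_of_super hα hβ.1 hlam.1 hlam.2 (C := κ * κ') (by positivity)
      hMc.continuousOn hφc (fun θ hθ => nonneg_of_comparable hκ' hφcomp hθ)
      (fun θ hθ => le_mul_of_comparable hκ hκ' hMcomp hφcomp hθ) ⟨_, he, (hMpos' he).2 hec⟩
      (fun η hη hηp => ⟨0, le_rfl, hlimM η hη ((hMpos' hη).1 hηp)⟩) (fun η hη hηp => ?_)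
    obtain ⟨L, hL, hR, hLR⟩ := h η (mem_capB_of_mem_cone hη ((hMpos' hη).1 hηp))
    obtain ⟨c, hc, hlim⟩ := tendsto_integral_coneCompl_homogExt hd hα hα2 hlam.1 hlam.2 hφc
      (by simpa [unitSphere] using hη) hL hR
    exact ⟨_, mul_nonpos_of_nonneg_of_nonpos hc.le hLR, hlim⟩
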